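/- (Splitting of Palais–Smale sequences.) Assume N ≥ 2, 0 < α < N and p > (N+α)/N. Let {u_n} ⊂ E_λ be a (PS)_c sequence for J_λ. Then, after passing to a subsequence, there exists u ∈ E_λ with u_n → u pointwise on G such that: (i) lim_{n→∞} J_λ(u_n − u) = c − J_λ(u); and (ii) ‖J'_λ(u_n − u)‖_{E_λ*} → 0 as n → ∞, i.e. {u_n − u} is a (PS)_{c−J_λ(u)} sequence for J_λ. -/

import Mathlib

open scoped BigOperators ENNReal
open Filter

noncomputable section

namespace Choquard

variable {G : Type*}

/-- The word metric on a group with generating set `S`. -/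
def wordDist [Group G] (S : Finset G) (x y : G) : ℕ :=
  sInf {k : ℕ | ∃ l : List G, (∀ g ∈ l, g ∈ S) ∧ l.length = k ∧ x⁻¹ * y = l.prod}

/-- The closed ball of radius `r` about `c` in the word metric. -/
def ball [Group G] (S : Finset G) (c : G) (r : ℝ) : Set G :=
  {x | (wordDist S x c : ℝ) ≤ r}

/-- Polynomial growth of homogeneous dimension `N`. -/
def PolyGrowth [Group G] (S : Finset G) (N : ℕ) : Prop :=
  ∃ C₁ C₂ : ℝ, 0 < C₁ ∧ 0 < C₂ ∧ ∀ r : ℝ, 1 ≤ r →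
    C₁ * r ^ N ≤ ((ball S (1 : G) r).ncard : ℝ) ∧
    ((ball S (1 : G) r).ncard : ℝ) ≤ C₂ * r ^ N

/-- Riesz-type asymptotics for the kernel `R`. -/
def RieszKernel [Group G] (S : Finset G) (N : ℕ) (α : ℝ) (R : G → G → ℝ) : Prop :=
  (∀ x y, 0 < R x y) ∧
  ∃ c₁ c₂ : ℝ, 0 < c₁ ∧ 0 < c₂ ∧ ∀ x y : G, x ≠ y →
    c₁ * (wordDist S x y : ℝ) ^ (α - (N : ℝ)) ≤ R x y ∧
    R x y ≤ c₂ * (wordDist S x y : ℝ) ^ (α - (N : ℝ))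

/-- Convolution `(R ∗ f)(x) = Σ_{y ≠ x} R x y f y`. -/
def conv [DecidableEq G] (R : G → G → ℝ) (f : G → ℝ) (x : G) : ℝ :=
  ∑' y, if y = x then 0 else R x y * f y

/-- The convolution as an extended-nonnegative-real valued sum. -/
def convE [DecidableEq G] (R : G → G → ℝ) (f : G → ℝ) (x : G) : ℝ≥0∞ :=
  ∑' y, if y = x then 0 else ENNReal.ofReal (R x y * f y)

/-- Membership in `ℓ^q(G)`. -/
def Memlp (q : ℝ) (u : G → ℝ) : Prop := Summable fun x => |u x| ^ q

/-- The `ℓ^q` norm. -/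
def lpNorm (q : ℝ) (u : G → ℝ) : ℝ := (∑' x, |u x| ^ q) ^ (1 / q)

/-- The `ℓ^∞` norm. -/
def supNorm (u : G → ℝ) : ℝ := ⨆ x, |u x|

/-- The graph Laplacian `Δu(x) = Σ_{s ∈ S} (u(xs) - u(x))`. -/
def lap [Group G] (S : Finset G) (u : G → ℝ) (x : G) : ℝ :=
  ∑ s ∈ S, (u (x * s) - u x)

/-- The gradient form `∇u∇v(x) = (1/2) Σ_{s ∈ S} (u(xs)-u(x))(v(xs)-v(x))`. -/
def grad [Group G] (S : Finset G) (u v : G → ℝ) (x : G) : ℝ :=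
  (1 / 2) * ∑ s ∈ S, (u (x * s) - u x) * (v (x * s) - v x)

/-- The density `|Δu|² + |∇u|² + (1 + λa)u²`. -/
def eDensity [Group G] (S : Finset G) (a : G → ℝ) (lam : ℝ) (u : G → ℝ) (x : G) : ℝ :=
  (lap S u x) ^ 2 + grad S u u x + (1 + lam * a x) * (u x) ^ 2

/-- Membership in the space `E_λ`. -/
def MemE [Group G] (S : Finset G) (a : G → ℝ) (lam : ℝ) (u : G → ℝ) : Prop :=
  Summable (eDensity S a lam u)

/-- `‖u‖²_{E_λ}`. -/
def normEsq [Group G] (S : Finset G) (a : G → ℝ) (lam : ℝ) (u : G → ℝ) : ℝ :=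
  ∑' x, eDensity S a lam u x

/-- `‖u‖_{E_λ}`. -/
def normE [Group G] (S : Finset G) (a : G → ℝ) (lam : ℝ) (u : G → ℝ) : ℝ :=
  Real.sqrt (normEsq S a lam u)

/-- The inner product `⟨u, v⟩_{E_λ}`. -/
def innerE [Group G] (S : Finset G) (a : G → ℝ) (lam : ℝ) (u v : G → ℝ) : ℝ :=
  ∑' x, (lap S u x * lap S v x + grad S u v x + (1 + lam * a x) * (u x * v x))

/-- The nonlocal term `Σ_G (R_α ∗ |u|^p)|u|^p`. -/
def Dterm [DecidableEq G] (R : G → G → ℝ) (p : ℝ) (u : G → ℝ) : ℝ :=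
  ∑' x, conv R (fun y => |u y| ^ p) x * |u x| ^ p

/-- The nonlocal pairing `Σ_G (R_α ∗ |u|^p)|u|^{p-2} u v`. -/
def Kterm [DecidableEq G] (R : G → G → ℝ) (p : ℝ) (u v : G → ℝ) : ℝ :=
  ∑' x, conv R (fun y => |u y| ^ p) x * (|u x| ^ (p - 2) * u x * v x)

/-- The energy functional `J_λ`. -/
def Jfun [Group G] [DecidableEq G] (S : Finset G) (a : G → ℝ) (lam : ℝ)
    (R : G → G → ℝ) (p : ℝ) (u : G → ℝ) : ℝ :=
  (1 / 2) * normEsq S a lam u - (1 / (2 * p)) * Dterm R p u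

/-- The derivative pairing `(J'_λ(u), v)`. -/
def Jd [Group G] [DecidableEq G] (S : Finset G) (a : G → ℝ) (lam : ℝ)
    (R : G → G → ℝ) (p : ℝ) (u v : G → ℝ) : ℝ :=
  innerE S a lam u v - Kterm R p u v

/-- The Nehari manifold `N_λ`. -/
def nehari [Group G] [DecidableEq G] (S : Finset G) (a : G → ℝ) (lam : ℝ)
    (R : G → G → ℝ) (p : ℝ) : Set (G → ℝ) :=
  {u | MemE S a lam u ∧ u ≠ 0 ∧ Jd S a lam R p u u = 0}

/-- `m_λ = inf_{N_λ} J_λ`. -/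
def mlam [Group G] [DecidableEq G] (S : Finset G) (a : G → ℝ) (lam : ℝ)
    (R : G → G → ℝ) (p : ℝ) : ℝ :=
  sInf (Jfun S a lam R p '' nehari S a lam R p)

/-- The norm of `J'_λ(u)` in the dual space `E_λ*`. -/
def dualNorm [Group G] [DecidableEq G] (S : Finset G) (a : G → ℝ) (lam : ℝ)
    (R : G → G → ℝ) (p : ℝ) (u : G → ℝ) : ℝ :=
  sSup {t : ℝ | ∃ v, MemE S a lam v ∧ normEsq S a lam v ≤ 1 ∧ t = |Jd S a lam R p u v|}

/-- `(PS)_c` sequence for `J_λ`. -/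
def PSseq [Group G] [DecidableEq G] (S : Finset G) (a : G → ℝ) (lam : ℝ)
    (R : G → G → ℝ) (p : ℝ) (c : ℝ) (U : ℕ → G → ℝ) : Prop :=
  (∀ n, MemE S a lam (U n)) ∧
  Tendsto (fun n => Jfun S a lam R p (U n)) atTop (nhds c) ∧
  Tendsto (fun n => dualNorm S a lam R p (U n)) atTop (nhds 0)

/-- The Cayley graph of `(G, S)`. -/
def cayley [Group G] (S : Finset G) : SimpleGraph G :=
  SimpleGraph.fromRel (fun x y => x⁻¹ * y ∈ S)

/-- Condition (A₁): the potential well `Ω = {a = 0}` is nonempty, finite and connected. -/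
def CondA1 [Group G] (S : Finset G) (a : G → ℝ) : Prop :=
  {x | a x = 0}.Nonempty ∧ {x | a x = 0}.Finite ∧
  ((cayley S).induce {x | a x = 0}).Connected

/-- Condition (A₂): some sublevel set `{a ≤ M}` is finite and nonempty. -/
def CondA2 (a : G → ℝ) : Prop :=
  ∃ M : ℝ, 0 < M ∧ {x | a x ≤ M}.Finite ∧ {x | a x ≤ M}.Nonempty

/-- The density `|Δu|² + |∇u|² + u²` of the `W^{2,2}` norm. -/
def wDensity [Group G] (S : Finset G) (u : G → ℝ) (x : G) : ℝ :=
  (lap S u x) ^ 2 + grad S u u x + (u x) ^ 2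

/-- Membership in `W^{2,2}(G)`. -/
def MemW [Group G] (S : Finset G) (u : G → ℝ) : Prop := Summable (wDensity S u)

/-- `‖u‖²_{W^{2,2}}`. -/
def normWsq [Group G] (S : Finset G) (u : G → ℝ) : ℝ := ∑' x, wDensity S u x

/-- Membership in `E(Ω)`: vanishing outside `Ω`. -/
def MemEOm (Ω : Set G) (u : G → ℝ) : Prop := ∀ x ∉ Ω, u x = 0

/-- `‖u‖²_{E(Ω)}`. -/
def normOmSq [Group G] (S : Finset G) (Ω : Set G) (u : G → ℝ) : ℝ :=
  (∑' x, ((lap S u x) ^ 2 + grad S u u x)) + ∑' x : Ω, (u (x : G)) ^ 2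

/-- The nonlocal term over `Ω`. -/
def DtermOm [DecidableEq G] (Ω : Set G) (R : G → G → ℝ) (p : ℝ) (u : G → ℝ) : ℝ :=
  ∑' x : Ω, conv R (fun y => |u y| ^ p) (x : G) * |u (x : G)| ^ p

/-- The limiting energy functional `J_Ω`. -/
def JOm [Group G] [DecidableEq G] (S : Finset G) (Ω : Set G) (R : G → G → ℝ) (p : ℝ)
    (u : G → ℝ) : ℝ :=
  (1 / 2) * normOmSq S Ω u - (1 / (2 * p)) * DtermOm Ω R p u

/-- The derivative pairing `(J'_Ω(u), v)`. -/
def JdOm [Group G] [DecidableEq G] (S : Finset G) (Ω : Set G) (R : G → G → ℝ) (p : ℝ)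
    (u v : G → ℝ) : ℝ :=
  (∑' x, (lap S u x * lap S v x + grad S u v x)) + (∑' x : Ω, u (x : G) * v (x : G))
    - ∑' x : Ω, conv R (fun y => |u y| ^ p) (x : G) * (|u (x : G)| ^ (p - 2) * u (x : G) * v (x : G))

/-- The Nehari manifold `N_Ω`. -/
def nehariOm [Group G] [DecidableEq G] (S : Finset G) (Ω : Set G) (R : G → G → ℝ)
    (p : ℝ) : Set (G → ℝ) :=
  {u | MemEOm Ω u ∧ u ≠ 0 ∧ JdOm S Ω R p u u = 0}

/-- `m_Ω = inf_{N_Ω} J_Ω`. -/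
def mOm [Group G] [DecidableEq G] (S : Finset G) (Ω : Set G) (R : G → G → ℝ) (p : ℝ) : ℝ :=
  sInf (JOm S Ω R p '' nehariOm S Ω R p)



/-- finite-sum formulation of an `ℓ²` bound -/
def L2 (u : G → ℝ) (A : ℝ) : Prop := ∀ s : Finset G, ∑ x ∈ s, (u x) ^ 2 ≤ A ^ 2

/-- finite-sum formulation of an `ℓ^σ⁻¹` bound for the kernel -/
def LK (σ : ℝ) (k : G → ℝ) (κ : ℝ) : Prop := ∀ s : Finset G, ∑ x ∈ s, (k x) ^ (σ⁻¹) ≤ κ ^ (σ⁻¹)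

lemma L2.mono {u w : G → ℝ} {A B : ℝ} (h : L2 u A) (hw : ∀ x, |w x| ≤ |u x|) (hA : 0 ≤ A)
    (hAB : A ≤ B) : L2 w B := fun s =>
  (Finset.sum_le_sum fun x _ => sq_le_sq.2 (hw x)).trans ((h s).trans (by gcongr))

lemma L2.abs_le {u : G → ℝ} {A : ℝ} (h : L2 u A) (hA : 0 ≤ A) (x : G) : |u x| ≤ A := by
  have := h {x}
  rw [Finset.sum_singleton] at this
  exact abs_le_of_sq_le_sq this hA

lemma L2.scale {u : G → ℝ} {A : ℝ} (h : L2 u A) (hA : 0 < A) : L2 (fun x => u x / A) 1 := by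
  intro s
  have := h s
  simp only [div_pow, ← Finset.sum_div]
  rw [div_le_iff₀ (by positivity)]
  simpa using this

lemma amgm_ptw {θ k a b : ℝ} (h1 : 1 < θ) (h2 : θ < 2) (hk : 0 ≤ k) (ha : 0 ≤ a) (hb : 0 ≤ b) :
    k * a ^ θ * b ^ θ ≤ (θ - 1) * (a ^ 2 * b ^ 2) + ((2 - θ) / 2) * (k ^ ((2 - θ)⁻¹) * a ^ 2)
      + ((2 - θ) / 2) * (k ^ ((2 - θ)⁻¹) * b ^ 2) := by
  have h3 : 0 < 2 - θ := by linarith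
  have key := Real.geom_mean_le_arith_mean3_weighted (w₁ := θ - 1) (w₂ := (2 - θ) / 2)
    (w₃ := (2 - θ) / 2) (p₁ := a ^ 2 * b ^ 2) (p₂ := k ^ ((2 - θ)⁻¹) * a ^ 2)
    (p₃ := k ^ ((2 - θ)⁻¹) * b ^ 2) (by linarith) (by linarith) (by linarith) (by positivity)
    (by positivity) (by positivity) (by ring)
  refine le_trans (le_of_eq ?_) key
  have hk0 : 0 ≤ k ^ ((2 - θ)⁻¹) := by positivity
  rw [Real.mul_rpow (by positivity) (by positivity), Real.mul_rpow hk0 (by positivity),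
    Real.mul_rpow hk0 (by positivity), ← Real.rpow_natCast a 2, ← Real.rpow_natCast b 2,
    ← Real.rpow_mul ha, ← Real.rpow_mul hb, ← Real.rpow_mul hk, ← Real.rpow_mul ha,
    ← Real.rpow_mul hb]
  have e1 : (2 - θ)⁻¹ * ((2 - θ) / 2) = 1 / 2 := by field_simp
  rw [e1]
  have e2 : k = k ^ ((1:ℝ) / 2) * k ^ ((1:ℝ) / 2) := by
    rw [← Real.rpow_add_of_nonneg hk (by norm_num) (by norm_num)]; norm_num
  have e3 : ∀ a : ℝ, 0 ≤ a → a ^ θ = a ^ (((2:ℕ):ℝ) * (θ - 1)) * a ^ (((2:ℕ):ℝ) * ((2 - θ) / 2)) := by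
    intro a ha
    rw [← Real.rpow_add_of_nonneg ha (by push_cast; linarith) (by push_cast; linarith)]
    congr 1; push_cast; ring
  rw [e3 a ha, e3 b hb]
  nth_rewrite 1 [e2]
  ring

lemma base_bound [Group G] {θ p : ℝ} (h1 : 1 < θ) (h2 : θ < 2) (hp : θ ≤ p) {k : G → ℝ}
    (hk : ∀ z, 0 ≤ k z) (hK : LK (2 - θ) k 1) {u h : G → ℝ} (hu : L2 u 1) (hh : L2 h 1)
    (s : Finset (G × G)) :
    ∑ z ∈ s, k (z.1⁻¹ * z.2) * |u z.2| ^ p * |h z.1| ^ p ≤ 1 := by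
  classical
  have hK' : ∀ t : Finset G, ∑ x ∈ t, (k x) ^ ((2 - θ)⁻¹) ≤ 1 := fun t => by
    simpa using hK t
  have hu' : ∀ t : Finset G, ∑ x ∈ t, (u x) ^ 2 ≤ 1 := fun t => by simpa using hu t
  have hh' : ∀ t : Finset G, ∑ x ∈ t, (h x) ^ 2 ≤ 1 := fun t => by simpa using hh t
  obtain ⟨X, Y, hs⟩ : ∃ X Y : Finset G, s ⊆ X ×ˢ Y :=
    ⟨s.image Prod.fst, s.image Prod.snd, fun z hz => Finset.mem_product.2
      ⟨Finset.mem_image_of_mem _ hz, Finset.mem_image_of_mem _ hz⟩⟩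
  have hpow : ∀ {t : ℝ}, |t| ≤ 1 → |t| ^ p ≤ |t| ^ θ := fun {t} ht =>
    Real.rpow_le_rpow_of_exponent_ge_of_imp (abs_nonneg _) ht hp (fun _ h => by linarith)
  have S1 : ∑ z ∈ X ×ˢ Y, |u z.2| ^ 2 * |h z.1| ^ 2 ≤ 1 := by
    rw [Finset.sum_product]
    simp only [sq_abs]
    calc ∑ x ∈ X, ∑ y ∈ Y, u y ^ 2 * h x ^ 2 = (∑ y ∈ Y, u y ^ 2) * ∑ x ∈ X, h x ^ 2 := by
          rw [Finset.sum_comm, Finset.sum_mul_sum]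
      _ ≤ 1 * 1 := by
          gcongr
          · exact hu' _
          · exact hh' _
      _ = 1 := one_mul 1
  have S2 : ∑ z ∈ X ×ˢ Y, k (z.1⁻¹ * z.2) ^ ((2 - θ)⁻¹) * |u z.2| ^ 2 ≤ 1 := by
    rw [Finset.sum_product_right]
    calc _ ≤ ∑ y ∈ Y, 1 * u y ^ 2 := by
          refine Finset.sum_le_sum fun y _ => ?_
          dsimp only
          rw [← Finset.sum_mul]
          simp only [sq_abs]
          gcongr
          refine le_trans (le_of_eq ?_) (hK' (X.image fun x => x⁻¹ * y))
          rw [Finset.sum_image]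
          intro a _ b _ hab
          simpa using hab
      _ ≤ 1 := by simpa using hu' Y
  have S3 : ∑ z ∈ X ×ˢ Y, k (z.1⁻¹ * z.2) ^ ((2 - θ)⁻¹) * |h z.1| ^ 2 ≤ 1 := by
    rw [Finset.sum_product]
    calc _ ≤ ∑ x ∈ X, 1 * h x ^ 2 := by
          refine Finset.sum_le_sum fun x _ => ?_
          dsimp only
          rw [← Finset.sum_mul]
          simp only [sq_abs]
          gcongr
          refine le_trans (le_of_eq ?_) (hK' (Y.image fun y => x⁻¹ * y))
          rw [Finset.sum_image]
          intro a _ b _ hab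
          simpa using hab
      _ ≤ 1 := by simpa using hh' X
  have hpt : ∀ z : G × G, 0 ≤ k (z.1⁻¹ * z.2) * |u z.2| ^ p * |h z.1| ^ p := fun z => by
    have := hk (z.1⁻¹ * z.2)
    positivity
  calc _ ≤ ∑ z ∈ X ×ˢ Y, k (z.1⁻¹ * z.2) * |u z.2| ^ p * |h z.1| ^ p :=
        Finset.sum_le_sum_of_subset_of_nonneg hs fun z _ _ => hpt z
    _ ≤ ∑ z ∈ X ×ˢ Y, ((θ - 1) * (|u z.2| ^ 2 * |h z.1| ^ 2)
          + ((2 - θ) / 2) * (k (z.1⁻¹ * z.2) ^ ((2 - θ)⁻¹) * |u z.2| ^ 2)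
          + ((2 - θ) / 2) * (k (z.1⁻¹ * z.2) ^ ((2 - θ)⁻¹) * |h z.1| ^ 2)) := by
        refine Finset.sum_le_sum fun z _ => ?_
        refine le_trans ?_ (amgm_ptw h1 h2 (hk _) (abs_nonneg _) (abs_nonneg _))
        have := hk (z.1⁻¹ * z.2)
        have e1 := hpow (hu.abs_le zero_le_one z.2)
        have e2 := hpow (hh.abs_le zero_le_one z.1)
        exact mul_le_mul (mul_le_mul_of_nonneg_left e1 this) e2 (by positivity) (by positivity)
    _ ≤ (θ - 1) * 1 + ((2 - θ) / 2) * 1 + ((2 - θ) / 2) * 1 := by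
        rw [Finset.sum_add_distrib, Finset.sum_add_distrib, ← Finset.mul_sum, ← Finset.mul_sum,
          ← Finset.mul_sum]
        have : 0 < 2 - θ := by linarith
        have : 0 < θ - 1 := by linarith
        gcongr
    _ = 1 := by ring

lemma mixed_L2 {p : ℝ} (hp : 1 < p) {w v : G → ℝ} (hw : L2 w 1) (hv : L2 v 1) :
    L2 (fun x => (|w x| ^ (p - 1) * |v x|) ^ p⁻¹) 1 := by
  intro s
  have hp0 : 0 < p := by linarith
  have hpt : ∀ x, ((|w x| ^ (p - 1) * |v x|) ^ p⁻¹) ^ 2 ≤ (1 - p⁻¹) * w x ^ 2 + p⁻¹ * v x ^ 2 := by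
    intro x
    have h1 : p⁻¹ < 1 := inv_lt_one_of_one_lt₀ hp
    have key := Real.geom_mean_le_arith_mean2_weighted (w₁ := 1 - p⁻¹) (w₂ := p⁻¹)
      (p₁ := |w x| ^ 2) (p₂ := |v x| ^ 2) (by linarith) (by positivity) (by positivity)
      (by positivity) (by ring)
    simp only [sq_abs] at key
    refine le_trans (le_of_eq ?_) key
    rw [← sq_abs (w x), ← sq_abs (v x)]
    rw [← Real.rpow_natCast (|w x|) 2, ← Real.rpow_natCast (|v x|) 2, ← Real.rpow_mul (abs_nonneg _),
      ← Real.rpow_mul (abs_nonneg _), Real.mul_rpow (by positivity) (by positivity),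
      ← Real.rpow_mul (abs_nonneg _), mul_pow, ← Real.rpow_mul_natCast (abs_nonneg _),
      ← Real.rpow_mul_natCast (abs_nonneg _)]
    congr 2
    · field_simp
    · ring
  have h1 : p⁻¹ < 1 := inv_lt_one_of_one_lt₀ hp
  calc _ ≤ ∑ x ∈ s, ((1 - p⁻¹) * w x ^ 2 + p⁻¹ * v x ^ 2) := Finset.sum_le_sum fun x _ => hpt x
    _ = (1 - p⁻¹) * ∑ x ∈ s, w x ^ 2 + p⁻¹ * ∑ x ∈ s, v x ^ 2 := by
        rw [Finset.sum_add_distrib, ← Finset.mul_sum, ← Finset.mul_sum]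
    _ ≤ (1 - p⁻¹) * 1 ^ 2 + p⁻¹ * 1 ^ 2 := by
        have : 0 ≤ 1 - p⁻¹ := by linarith
        gcongr
        · exact hw s
        · exact hv s
    _ = 1 ^ 2 := by ring

/-- The basic nonnegative summand. -/
def Phi (k : G → G → ℝ) (p : ℝ) (u w v : G → ℝ) (z : G × G) : ℝ :=
  k z.1 z.2 * |u z.2| ^ p * (|w z.1| ^ (p - 1) * |v z.1|)

lemma Phi_bound [Group G] {θ p : ℝ} (h1 : 1 < θ) (h2 : θ < 2) (hp : θ ≤ p) {k : G → ℝ}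
    (hk : ∀ z, 0 ≤ k z) {κ : ℝ} (hκ : 0 < κ) (hK : LK (2 - θ) k κ) {Q : G → G → ℝ}
    (hQ : ∀ x y, Q x y ≤ k (x⁻¹ * y)) {u w v : G → ℝ} {A B D : ℝ}
    (hA : 0 < A) (hB : 0 < B) (hD : 0 < D) (hu : L2 u A) (hw : L2 w B) (hv : L2 v D)
    (s : Finset (G × G)) :
    ∑ z ∈ s, Phi Q p u w v z ≤ κ * A ^ p * (B ^ (p - 1) * D) := by
  have hp1 : 1 < p := by linarith
  have hp0 : p ≠ 0 := by linarith
  have hK1 : LK (2 - θ) (fun z => k z / κ) 1 := by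
    intro t
    have := hK t
    simp only [Real.div_rpow (hk _) hκ.le, ← Finset.sum_div, Real.one_rpow]
    exact (div_le_one (by positivity)).2 this
  have key := base_bound h1 h2 hp (fun z => div_nonneg (hk z) hκ.le) hK1 (hu.scale hA)
    (mixed_L2 hp1 (hw.scale hB) (hv.scale hD)) s
  have hpt : ∀ z : G × G, Phi Q p u w v z ≤ (κ * A ^ p * (B ^ (p - 1) * D)) *
      (k (z.1⁻¹ * z.2) / κ * |u z.2 / A| ^ p *
        |(|w z.1 / B| ^ (p - 1) * |v z.1 / D|) ^ p⁻¹| ^ p) := by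
    intro z
    have e1 : |(|w z.1 / B| ^ (p - 1) * |v z.1 / D|) ^ p⁻¹| ^ p
        = (|w z.1| ^ (p - 1) / B ^ (p - 1)) * (|v z.1| / D) := by
      rw [abs_of_nonneg (by positivity), Real.rpow_inv_rpow (by positivity) hp0, abs_div, abs_div,
        abs_of_pos hB, abs_of_pos hD, Real.div_rpow (abs_nonneg _) hB.le]
    rw [e1, abs_div, abs_of_pos hA, Real.div_rpow (abs_nonneg _) hA.le]
    have e2 : Phi Q p u w v z ≤ k (z.1⁻¹ * z.2) * |u z.2| ^ p * (|w z.1| ^ (p - 1) * |v z.1|) := by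
      unfold Phi
      gcongr
      exact hQ _ _
    refine e2.trans (le_of_eq ?_)
    have : A ^ p ≠ 0 := by positivity
    have : B ^ (p - 1) ≠ 0 := by positivity
    field_simp
  refine (Finset.sum_le_sum fun z _ => hpt z).trans ?_
  rw [← Finset.mul_sum]
  exact mul_le_of_le_one_right (by positivity) key


lemma summable_wordDist [Group G] {S : Finset G} {N : ℕ} (hg : PolyGrowth S N)
    {β : ℝ} (hβ : (N : ℝ) < β) : Summable fun z : G => (wordDist S z 1 : ℝ) ^ (-β) := by
  classical
  obtain ⟨C₁, C₂, hC₁, hC₂, h⟩ := hg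
  have hβ0 : 0 < β := lt_of_le_of_lt (Nat.cast_nonneg N) hβ
  have hfin : ∀ r : ℝ, 1 ≤ r → (ball S (1 : G) r).Finite := by
    intro r hr
    apply Set.finite_of_ncard_pos
    have h1 := (h r hr).1
    have : (0 : ℝ) < C₁ * r ^ N := by positivity
    exact_mod_cast this.trans_le h1
  set q : ℝ := (2 : ℝ) ^ ((N : ℝ) - β) with hq
  have hq0 : 0 ≤ q := by positivity
  have hq1 : q < 1 := Real.rpow_lt_one_of_one_lt_of_neg (by norm_num) (by linarith)
  have hterm : ∀ j : ℕ, C₂ * ((2 : ℝ) ^ (j + 1)) ^ N * ((2 : ℝ) ^ j) ^ (-β) = C₂ * 2 ^ N * q ^ j := by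
    intro j
    have e : q ^ j = ((2 : ℝ) ^ j) ^ N * ((2 : ℝ) ^ j) ^ (-β) := by
      rw [← Real.rpow_natCast ((2 : ℝ) ^ j) N, ← Real.rpow_add (by positivity), hq,
        ← Real.rpow_natCast 2 j, ← Real.rpow_natCast _ j, ← Real.rpow_mul (by norm_num),
        ← Real.rpow_mul (by norm_num)]
      congr 1; ring
    rw [e]; ring
  refine summable_of_sum_le (c := ∑' j : ℕ, C₂ * 2 ^ N * q ^ j) (fun z => by positivity) ?_
  intro t
  set J := t.sup (fun z => Nat.log 2 (wordDist S z 1)) + 1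
  have hmap : ∀ z ∈ t, Nat.log 2 (wordDist S z 1) ∈ Finset.range J := fun z hz =>
    Finset.mem_range.2 (Nat.lt_succ_of_le (Finset.le_sup (f := fun z => Nat.log 2 (wordDist S z 1)) hz))
  rw [← Finset.sum_fiberwise_of_maps_to hmap]
  have hsm : Summable fun j : ℕ => C₂ * 2 ^ N * q ^ j :=
    (summable_geometric_of_lt_one hq0 hq1).mul_left _
  refine le_trans (Finset.sum_le_sum fun j _ => ?_)
    (hsm.sum_le_tsum (Finset.range J) fun j _ => by positivity)
  rw [← hterm]
  have hr : (1 : ℝ) ≤ 2 ^ (j + 1) := one_le_pow₀ (by norm_num)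
  have hpt : ∀ z ∈ t.filter (fun z => Nat.log 2 (wordDist S z 1) = j),
      (wordDist S z 1 : ℝ) ^ (-β) ≤ ((2 : ℝ) ^ j) ^ (-β) := by
    intro z hz
    rcases Nat.eq_zero_or_pos (wordDist S z 1) with h0 | h0
    · rw [h0, Nat.cast_zero, Real.zero_rpow (by linarith)]; positivity
    · have h2 : 2 ^ j ≤ wordDist S z 1 := by
        rw [← (Finset.mem_filter.1 hz).2]; exact Nat.pow_log_le_self 2 h0.ne'
      have h3 : (2 : ℝ) ^ j ≤ wordDist S z 1 := by exact_mod_cast h2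
      exact Real.rpow_le_rpow_of_nonpos (by positivity) h3 (by linarith)
  refine (Finset.sum_le_card_nsmul _ _ _ hpt).trans ?_
  rw [nsmul_eq_mul]
  gcongr
  refine le_trans ?_ (h _ hr).2
  refine Nat.cast_le.2 ?_
  rw [← Set.ncard_coe_finset]
  refine Set.ncard_le_ncard ?_ (hfin _ hr)
  intro z hz
  have hz' := (Finset.mem_filter.1 (Finset.mem_coe.1 hz)).2
  have : wordDist S z 1 < 2 ^ (j + 1) := by
    rw [← hz']; exact Nat.lt_pow_succ_log_self (by norm_num) _
  simp only [ball, Set.mem_ofPred_eq]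
  exact_mod_cast this.le

/-- Existence of a dominating convolution kernel in `ℓ^{1/(2-θ)}`. -/
lemma exists_kernel [Group G] [DecidableEq G] {S : Finset G} {N : ℕ} (hN : 2 ≤ N)
    (hg : PolyGrowth S N)
    {α : ℝ} (hα0 : 0 < α) (hαN : α < (N : ℝ)) {R : G → G → ℝ} (hR : RieszKernel S N α R)
    {p : ℝ} (hp : ((N : ℝ) + α) / (N : ℝ) < p) :
    ∃ θ : ℝ, 1 < θ ∧ θ < 2 ∧ θ ≤ p ∧ ∃ k : G → ℝ, (∀ z, 0 ≤ k z) ∧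
      Summable (fun z => k z ^ ((2 - θ)⁻¹)) ∧
      ∀ x y, (if y = x then 0 else R x y) ≤ k (x⁻¹ * y) := by
  have hN0 : (0 : ℝ) < N := by exact_mod_cast (by omega : 0 < N)
  obtain ⟨hpos, c₁, c₂, hc₁, hc₂, h⟩ := hR
  have hlt2 : ((N : ℝ) + α) / N < 2 := by rw [div_lt_iff₀ hN0]; linarith
  have hgt1 : 1 < ((N : ℝ) + α) / N := by rw [lt_div_iff₀ hN0]; linarith
  obtain ⟨θ, hθ1, hθ2⟩ := exists_between (lt_min hp hlt2)
  have hθp : θ < p := hθ2.trans_le (min_le_left _ _)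
  have hθ22 : θ < 2 := hθ2.trans_le (min_le_right _ _)
  refine ⟨θ, hgt1.trans hθ1, hθ22, hθp.le,
    fun z => c₂ * (wordDist S 1 z : ℝ) ^ (α - (N : ℝ)), fun z => by positivity, ?_, ?_⟩
  · have hσ : 0 < 2 - θ := by linarith
    have hβ : (N : ℝ) < ((N : ℝ) - α) * (2 - θ)⁻¹ := by
      rw [← div_eq_mul_inv, lt_div_iff₀ hσ]
      rw [div_lt_iff₀ hN0] at hθ1
      nlinarith
    have hs := summable_wordDist hg hβ
    have hs2 := ((Equiv.inv G).summable_iff.2 hs).mul_left (c₂ ^ ((2 - θ)⁻¹))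
    refine hs2.congr fun z => ?_
    have e : wordDist S z⁻¹ 1 = wordDist S 1 z := by simp [wordDist]
    simp only [Function.comp, Equiv.inv_apply, e]
    rw [Real.mul_rpow hc₂.le (by positivity), ← Real.rpow_mul (by positivity)]
    congr 2; ring
  · intro x y
    have e : wordDist S 1 (x⁻¹ * y) = wordDist S x y := by simp [wordDist]
    simp only [e]
    split_ifs with hxy
    · positivity
    · exact (h x y (Ne.symm hxy)).2

/-- Homogeneous functions are nearly continuous in a scale invariant way. -/
lemma homog_est {q : ℝ} (hq : 0 < q) {ψ : ℝ → ℝ} (hψ : ContinuousAt ψ 1)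
    (hb : ∀ t, |ψ t| ≤ |t| ^ q)
    (hh : ∀ b t, |ψ (b * t) - ψ b| = |b| ^ q * |ψ t - ψ 1|) {ε : ℝ} (hε : 0 < ε) :
    ∃ C : ℝ, 0 ≤ C ∧ ∀ a b, |ψ a - ψ b| ≤ ε * |b| ^ q + C * |a - b| ^ q := by
  obtain ⟨δ, hδ, h⟩ := Metric.continuousAt_iff.1 hψ ε hε
  refine ⟨1 + (1 / δ + 1) ^ q + (1 / δ) ^ q, by positivity, fun a b => ?_⟩
  by_cases hb0 : b = 0
  · subst hb0
    have h0 : ψ 0 = 0 := by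
      have := hb 0
      rw [abs_zero, Real.zero_rpow hq.ne'] at this
      exact abs_eq_zero.1 (le_antisymm this (abs_nonneg _))
    simp only [h0, sub_zero, abs_zero, Real.zero_rpow hq.ne', mul_zero, zero_add]
    refine (hb a).trans (le_mul_of_one_le_left (by positivity) ?_)
    have : 0 ≤ (1 / δ + 1) ^ q + (1 / δ) ^ q := by positivity
    linarith
  · have ht : a = b * (a / b) := by field_simp
    set t := a / b
    rw [ht, hh]
    have e : b * t - b = b * (t - 1) := by ring
    rw [e, abs_mul, Real.mul_rpow (abs_nonneg _) (abs_nonneg _)]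
    have key : |ψ t - ψ 1| ≤ ε + (1 + (1 / δ + 1) ^ q + (1 / δ) ^ q) * |t - 1| ^ q := by
      by_cases hd : |t - 1| < δ
      · have h1 := h (x := t) (by rwa [Real.dist_eq])
        rw [Real.dist_eq] at h1
        have : 0 ≤ (1 + (1 / δ + 1) ^ q + (1 / δ) ^ q) * |t - 1| ^ q := by positivity
        linarith
      · push Not at hd
        have h1 : 1 ≤ (1 / δ) * |t - 1| := by
          rw [one_div, ← div_eq_inv_mul, le_div_iff₀ hδ]; linarith
        have h2 : |t| ≤ (1 / δ + 1) * |t - 1| := by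
          have : |t| ≤ |t - 1| + 1 := by
            have := abs_add_le (t - 1) 1
            simpa using this
          linarith
        have h3 : |t| ^ q ≤ (1 / δ + 1) ^ q * |t - 1| ^ q := by
          rw [← Real.mul_rpow (by positivity) (abs_nonneg _)]
          exact Real.rpow_le_rpow (abs_nonneg _) h2 hq.le
        have h4 : 1 ≤ (1 / δ) ^ q * |t - 1| ^ q := by
          rw [← Real.mul_rpow (by positivity) (abs_nonneg _)]
          exact Real.one_le_rpow h1 hq.le
        have h5 : |ψ 1| ≤ 1 := by simpa using hb 1
        have h6 := abs_sub (ψ t) (ψ 1)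
        have h7 := hb t
        have : 0 ≤ |t - 1| ^ q := by positivity
        nlinarith
    have hbq : 0 ≤ |b| ^ q := by positivity
    calc _ ≤ |b| ^ q * (ε + (1 + (1 / δ + 1) ^ q + (1 / δ) ^ q) * |t - 1| ^ q) :=
          mul_le_mul_of_nonneg_left key hbq
      _ = _ := by ring

/-- The odd power `|t|^{p-2} t`. -/
def Bf (p t : ℝ) : ℝ := |t| ^ (p - 2) * t

lemma abs_Bf {p : ℝ} (hp : 1 < p) (t : ℝ) : |Bf p t| = |t| ^ (p - 1) := by
  unfold Bf
  rw [abs_mul, abs_of_nonneg (by positivity : 0 ≤ |t| ^ (p - 2))]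
  rcases eq_or_ne t 0 with h | h
  · subst h; rw [abs_zero, mul_zero, Real.zero_rpow (by linarith)]
  · rw [← Real.rpow_add_one (abs_ne_zero.2 h)]; congr 1; ring

lemma Bf_mul_self {p : ℝ} (hp : 1 < p) (t : ℝ) : Bf p t * t = |t| ^ p := by
  unfold Bf
  rcases eq_or_ne t 0 with h | h
  · subst h; rw [abs_zero, mul_zero, Real.zero_rpow (by linarith)]
  · rw [mul_assoc, ← abs_mul_abs_self, ← mul_assoc, ← Real.rpow_add_one (abs_ne_zero.2 h),
      ← Real.rpow_add_one (abs_ne_zero.2 h)]; congr 1; ring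

lemma Bf_est {p : ℝ} (hp : 1 < p) {ε : ℝ} (hε : 0 < ε) :
    ∃ C : ℝ, 0 ≤ C ∧ ∀ a b, |Bf p a - Bf p b| ≤ ε * |b| ^ (p - 1) + C * |a - b| ^ (p - 1) := by
  refine homog_est (by linarith) ?_ (fun t => (abs_Bf hp t).le) ?_ hε
  · unfold Bf
    refine ContinuousAt.mul (ContinuousAt.rpow_const continuous_abs.continuousAt ?_) continuousAt_id
    left; simp
  · intro b t
    have : Bf p (b * t) - Bf p b = Bf p b * (Bf p t - Bf p 1) := by
      simp only [Bf, abs_mul, Real.mul_rpow (abs_nonneg b) (abs_nonneg t), abs_one, Real.one_rpow]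
      ring
    rw [this, abs_mul, abs_Bf hp]

lemma Af_est {p : ℝ} (hp : 1 < p) {ε : ℝ} (hε : 0 < ε) :
    ∃ C : ℝ, 0 ≤ C ∧ ∀ a b : ℝ, |(|a| ^ p - |b| ^ p)| ≤ ε * |b| ^ p + C * |a - b| ^ p := by
  refine homog_est (ψ := fun t => |t| ^ p) (by linarith) ?_
    (fun t => (abs_of_nonneg (by positivity)).le) ?_ hε
  · exact ContinuousAt.rpow_const continuous_abs.continuousAt (Or.inr (by linarith))
  · intro b t
    have : |b * t| ^ p - |b| ^ p = |b| ^ p * (|t| ^ p - |(1 : ℝ)| ^ p) := by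
      simp only [abs_mul, Real.mul_rpow (abs_nonneg b) (abs_nonneg t), abs_one, Real.one_rpow]
      ring
    show |(|b * t| ^ p - |b| ^ p)| = |b| ^ p * |(|t| ^ p - |(1 : ℝ)| ^ p)|
    rw [this, abs_mul, abs_of_nonneg (by positivity : 0 ≤ |b| ^ p)]

section K

lemma tsum_abs_le {ι : Type*} {f g : ι → ℝ} {a : ℝ} (hg : HasSum g a) (h : ∀ i, |f i| ≤ g i) :
    |∑' i, f i| ≤ a := by
  rw [← Real.norm_eq_abs]; exact tsum_of_norm_bounded hg h

/-- Kernel data. -/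
structure KD [Group G] (θ p : ℝ) (Q : G → G → ℝ) (k : G → ℝ) : Prop where
  h1 : 1 < θ
  h2 : θ < 2
  hp : θ ≤ p
  hk : ∀ z, 0 ≤ k z
  hs : Summable (fun z => k z ^ ((2 - θ)⁻¹))
  hQ0 : ∀ x y, 0 ≤ Q x y
  hQ : ∀ x y, Q x y ≤ k (x⁻¹ * y)

variable {θ p : ℝ} {Q : G → G → ℝ} {k : G → ℝ}

lemma KD.p1 [Group G] (H : KD θ p Q k) : 1 < p := H.h1.trans_le H.hp

lemma KD.exists_LK [Group G] (H : KD θ p Q k) : ∃ κ : ℝ, 0 < κ ∧ LK (2 - θ) k κ := by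
  have hσ : 0 < 2 - θ := by linarith [H.h2]
  set T := ∑' z, k z ^ ((2 - θ)⁻¹)
  have hT : 0 ≤ T := tsum_nonneg fun z => Real.rpow_nonneg (H.hk z) _
  refine ⟨(T + 1) ^ (2 - θ), by positivity, fun t => ?_⟩
  rw [Real.rpow_rpow_inv (by positivity) hσ.ne']
  have := H.hs.sum_le_tsum t fun z _ => Real.rpow_nonneg (H.hk z) _
  linarith

lemma KD.tail [Group G] (H : KD θ p Q k) [DecidableEq G] {ε : ℝ} (hε : 0 < ε) :
    ∃ Z : Finset G, LK (2 - θ) (fun z => if z ∈ Z then 0 else k z) ε := by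
  have hσ : 0 < 2 - θ := by linarith [H.h2]
  obtain ⟨Z, hZ⟩ := summable_iff_vanishing_norm.1 H.hs (ε ^ ((2 - θ)⁻¹)) (by positivity)
  refine ⟨Z, fun t => ?_⟩
  have h := (le_abs_self _).trans (hZ (t \ Z) Finset.sdiff_disjoint).le
  refine le_trans (le_of_eq ?_) h
  rw [← Finset.filter_notMem_eq_sdiff, Finset.sum_filter]
  refine Finset.sum_congr rfl fun z _ => ?_
  by_cases hz : z ∈ Z
  · simp [hz, Real.zero_rpow (inv_ne_zero hσ.ne')]
  · simp [hz]

lemma Phi_nonneg (hQ0 : ∀ x y, 0 ≤ Q x y) (u w v : G → ℝ) (z : G × G) : 0 ≤ Phi Q p u w v z := by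
  have := hQ0 z.1 z.2
  unfold Phi
  positivity

lemma Phi_sum [Group G] (H : KD θ p Q k) {κ : ℝ} (hκ : 0 < κ) (hK : LK (2 - θ) k κ)
    {u w v : G → ℝ} {A B D : ℝ}
    (hA : 0 < A) (hB : 0 < B) (hD : 0 < D) (hu : L2 u A) (hw : L2 w B) (hv : L2 v D) :
    Summable (Phi Q p u w v) ∧ ∑' z, Phi Q p u w v z ≤ κ * A ^ p * (B ^ (p - 1) * D) := by
  have h := Phi_bound H.h1 H.h2 H.hp H.hk hκ hK H.hQ hA hB hD hu hw hv
  have h0 : 0 ≤ Phi Q p u w v := Phi_nonneg H.hQ0 u w v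
  exact ⟨summable_of_sum_le h0 h, Real.tsum_le_of_sum_le h0 h⟩

/-- summand of the nonlocal pairing -/
def KS (Q : G → G → ℝ) (p : ℝ) (u v : G → ℝ) (z : G × G) : ℝ :=
  Q z.1 z.2 * |u z.2| ^ p * (Bf p (u z.1) * v z.1)

/-- nonlocal pairing as a sum over pairs -/
def KK (Q : G → G → ℝ) (p : ℝ) (u v : G → ℝ) : ℝ := ∑' z : G × G, KS Q p u v z

lemma abs_KS (hp : 1 < p) (hQ0 : ∀ x y, 0 ≤ Q x y) (u v : G → ℝ) (z : G × G) :
    |KS Q p u v z| = Phi Q p u u v z := by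
  unfold KS Phi
  rw [abs_mul, abs_mul, abs_mul, abs_Bf hp, abs_of_nonneg (hQ0 _ _),
    abs_of_nonneg (by positivity : 0 ≤ |u z.2| ^ p)]

lemma KS_summable [Group G] (H : KD θ p Q k) {u v : G → ℝ} {A D : ℝ}
    (hA : 0 < A) (hD : 0 < D) (hu : L2 u A) (hv : L2 v D) : Summable (KS Q p u v) := by
  obtain ⟨κ, hκ, hK⟩ := H.exists_LK
  exact Summable.of_norm_bounded (Phi_sum H hκ hK hA hA hD hu hu hv).1
    fun z => (abs_KS H.p1 H.hQ0 u v z).le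

lemma KK_bound [Group G] (H : KD θ p Q k) {κ : ℝ} (hκ : 0 < κ) (hK : LK (2 - θ) k κ)
    {u v : G → ℝ} {A D : ℝ}
    (hA : 0 < A) (hD : 0 < D) (hu : L2 u A) (hv : L2 v D) :
    |KK Q p u v| ≤ κ * A ^ p * (A ^ (p - 1) * D) := by
  have h := Phi_sum H hκ hK hA hA hD hu hu hv
  exact le_trans (tsum_abs_le h.1.hasSum fun z => (abs_KS H.p1 H.hQ0 u v z).le) h.2

lemma KK_smul (u v : G → ℝ) (c : ℝ) : KK Q p u (fun x => c * v x) = c * KK Q p u v := by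
  unfold KK
  rw [← tsum_mul_left]
  refine tsum_congr fun z => ?_
  unfold KS; ring

lemma KK_add [Group G] (H : KD θ p Q k) {u v w : G → ℝ} {A D : ℝ}
    (hA : 0 < A) (hD : 0 < D) (hu : L2 u A) (hv : L2 v D) (hw : L2 w D) :
    KK Q p u (fun x => v x + w x) = KK Q p u v + KK Q p u w := by
  unfold KK
  rw [← (KS_summable H hA hD hu hv).tsum_add (KS_summable H hA hD hu hw)]
  refine tsum_congr fun z => ?_
  unfold KS; ring

lemma L2.add {u w : G → ℝ} {A : ℝ} (hu : L2 u A) (hw : L2 w A) :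
    L2 (fun x => u x + w x) (2 * A) := by
  intro s
  have h1 := hu s
  have h2 := hw s
  have : ∑ x ∈ s, (u x + w x) ^ 2 ≤ ∑ x ∈ s, (2 * (u x) ^ 2 + 2 * (w x) ^ 2) :=
    Finset.sum_le_sum fun x _ => by nlinarith [sq_nonneg (u x - w x)]
  rw [Finset.sum_add_distrib, ← Finset.mul_sum, ← Finset.mul_sum] at this
  nlinarith

/-- Uniform continuity of the nonlocal pairing on bounded sets. -/
lemma KK_uc [Group G] (H : KD θ p Q k) {M : ℝ} (hM : 0 < M) {ε : ℝ} (hε : 0 < ε) :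
    ∃ δ : ℝ, 0 < δ ∧ ∀ u u' v : G → ℝ, L2 u M → L2 u' M → L2 (fun x => u x - u' x) δ → L2 v M →
      |KK Q p u v - KK Q p u' v| ≤ ε := by
  obtain ⟨κ, hκ, hK⟩ := H.exists_LK
  have hp1 := H.p1
  set L := κ * M ^ p * (M ^ (p - 1) * M) with hL
  have hL0 : 0 < L := by positivity
  set η := ε / (4 * L) with hη
  have hη0 : 0 < η := by positivity
  obtain ⟨C₁, hC₁, hA⟩ := Af_est hp1 hη0
  obtain ⟨C₂, hC₂, hB⟩ := Bf_est hp1 hη0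
  have hcont : Tendsto (fun δ : ℝ => C₁ * (κ * δ ^ p * (M ^ (p - 1) * M)) +
      C₂ * (κ * M ^ p * (δ ^ (p - 1) * M))) (nhdsWithin 0 (Set.Ioi 0)) (nhds 0) := by
    have h1 : ContinuousAt (fun δ : ℝ => C₁ * (κ * δ ^ p * (M ^ (p - 1) * M)) +
      C₂ * (κ * M ^ p * (δ ^ (p - 1) * M))) 0 := by
      have e1 : ContinuousAt (fun δ : ℝ => δ ^ p) 0 :=
        Real.continuousAt_rpow_const _ _ (Or.inr (by linarith))
      have e2 : ContinuousAt (fun δ : ℝ => δ ^ (p - 1)) 0 :=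
        Real.continuousAt_rpow_const _ _ (Or.inr (by linarith))
      fun_prop
    have h2 := h1.tendsto
    simp only [Real.zero_rpow (by linarith : p ≠ 0), Real.zero_rpow (by linarith : p - 1 ≠ 0),
      mul_zero, zero_mul, add_zero] at h2
    exact h2.mono_left nhdsWithin_le_nhds
  obtain ⟨δ, hδ1, hδ0⟩ := ((hcont.eventually (gt_mem_nhds (half_pos hε))).and
    self_mem_nhdsWithin).exists
  have hδ0 : 0 < δ := hδ0
  refine ⟨δ, hδ0, fun u u' v hu hu' hd hv => ?_⟩
  have b1 := Phi_sum H hκ hK hM hM hM hu' hu hv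
  have b2 := Phi_sum H hκ hK hδ0 hM hM hd hu hv
  have b3 := Phi_sum H hκ hK hM hM hM hu' hu' hv
  have b4 := Phi_sum H hκ hK hM hδ0 hM hu' hd hv
  unfold KK
  rw [← (KS_summable H hM hM hu hv).tsum_sub (KS_summable H hM hM hu' hv)]
  have hsum := (((b1.1.hasSum.mul_left η).add (b2.1.hasSum.mul_left C₁)).add
    (b3.1.hasSum.mul_left η)).add (b4.1.hasSum.mul_left C₂)
  refine le_trans (tsum_abs_le hsum fun z => ?_) ?_
  · have hq := H.hQ0 z.1 z.2
    have e : KS Q p u v z - KS Q p u' v z =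
        Q z.1 z.2 * ((|u z.2| ^ p - |u' z.2| ^ p) * Bf p (u z.1)
          + |u' z.2| ^ p * (Bf p (u z.1) - Bf p (u' z.1))) * v z.1 := by
      unfold KS; ring
    rw [e, abs_mul, abs_mul, abs_of_nonneg hq]
    have e2 : |(|u z.2| ^ p - |u' z.2| ^ p) * Bf p (u z.1)
          + |u' z.2| ^ p * (Bf p (u z.1) - Bf p (u' z.1))| ≤
        (η * |u' z.2| ^ p + C₁ * |u z.2 - u' z.2| ^ p) * |u z.1| ^ (p - 1)
        + |u' z.2| ^ p * (η * |u' z.1| ^ (p - 1) + C₂ * |u z.1 - u' z.1| ^ (p - 1)) := by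
      refine (abs_add_le _ _).trans ?_
      rw [abs_mul, abs_mul, abs_Bf hp1, abs_of_nonneg (by positivity : 0 ≤ |u' z.2| ^ p)]
      gcongr
      · exact hA _ _
      · exact hB _ _
    calc _ ≤ Q z.1 z.2 * ((η * |u' z.2| ^ p + C₁ * |u z.2 - u' z.2| ^ p) * |u z.1| ^ (p - 1)
        + |u' z.2| ^ p * (η * |u' z.1| ^ (p - 1) + C₂ * |u z.1 - u' z.1| ^ (p - 1))) * |v z.1| := by
          gcongr
      _ = _ := by unfold Phi; ring
  · have g1 := mul_le_mul_of_nonneg_left b1.2 hη0.le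
    have g2 := mul_le_mul_of_nonneg_left b2.2 hC₁
    have g3 := mul_le_mul_of_nonneg_left b3.2 hη0.le
    have g4 := mul_le_mul_of_nonneg_left b4.2 hC₂
    have hηL : η * L = ε / 4 := by rw [hη]; field_simp
    rw [hL] at hηL
    linarith

lemma small_delta {p : ℝ} (hp1 : 1 < p) {ε : ℝ} (M κ : ℝ) (hε : 0 < ε) :
    ∃ δ : ℝ, 0 < δ ∧ κ * M ^ p * (δ ^ (p - 1) * M) + κ * M ^ p * (M ^ (p - 1) * δ) < ε := by
  have h1 : ContinuousAt (fun δ : ℝ => κ * M ^ p * (δ ^ (p - 1) * M)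
      + κ * M ^ p * (M ^ (p - 1) * δ)) 0 := by
    have e2 : ContinuousAt (fun δ : ℝ => δ ^ (p - 1)) 0 :=
      Real.continuousAt_rpow_const _ _ (Or.inr (by linarith))
    fun_prop
  have h2 := h1.tendsto
  simp only [Real.zero_rpow (by linarith : p - 1 ≠ 0), mul_zero, zero_mul, add_zero] at h2
  obtain ⟨δ, hδ1, hδ0⟩ := (((h2.mono_left nhdsWithin_le_nhds).eventually (gt_mem_nhds hε)).and
    (self_mem_nhdsWithin (s := Set.Ioi (0 : ℝ)))).exists
  exact ⟨δ, hδ0, hδ1⟩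

/-- cutoffs -/
def cut [DecidableEq G] (F : Finset G) (u : G → ℝ) (x : G) : ℝ := if x ∈ F then u x else 0
/-- complementary cutoffs -/
def cutc [DecidableEq G] (F : Finset G) (u : G → ℝ) (x : G) : ℝ := if x ∈ F then 0 else u x

lemma cut_add [DecidableEq G] (F : Finset G) (u : G → ℝ) (x : G) :
    cut F u x + cutc F u x = u x := by
  unfold cut cutc; split_ifs <;> simp

lemma abs_cut_le [DecidableEq G] (F : Finset G) (u : G → ℝ) (x : G) : |cut F u x| ≤ |u x| := by
  unfold cut; split_ifs <;> simp

lemma abs_cutc_le [DecidableEq G] (F : Finset G) (u : G → ℝ) (x : G) : |cutc F u x| ≤ |u x| := by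
  unfold cutc; split_ifs <;> simp

lemma L2.cut [DecidableEq G] {u : G → ℝ} {A : ℝ} (h : L2 u A) (hA : 0 ≤ A) (F : Finset G) :
    L2 (cut F u) A := h.mono (abs_cut_le F u) hA le_rfl

lemma L2.cutc [DecidableEq G] {u : G → ℝ} {A : ℝ} (h : L2 u A) (hA : 0 ≤ A) (F : Finset G) :
    L2 (cutc F u) A := h.mono (abs_cutc_le F u) hA le_rfl

lemma L2.exists_cutc [DecidableEq G] {u : G → ℝ} {A : ℝ} (h : L2 u A) {δ : ℝ} (hδ : 0 < δ) :
    ∃ F : Finset G, L2 (Choquard.cutc F u) δ := by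
  have hs : Summable fun x => u x ^ 2 := summable_of_sum_le (fun x => sq_nonneg _) h
  obtain ⟨F, hF⟩ := summable_iff_vanishing_norm.1 hs (δ ^ 2) (by positivity)
  refine ⟨F, fun t => ?_⟩
  have h := (le_abs_self _).trans (hF (t \ F) Finset.sdiff_disjoint).le
  refine le_trans (le_of_eq ?_) h
  rw [← Finset.filter_notMem_eq_sdiff, Finset.sum_filter]
  refine Finset.sum_congr rfl fun z _ => ?_
  by_cases hz : z ∈ F <;> simp [Choquard.cutc, hz]

lemma L2_cut_eventually [DecidableEq G] {w : ℕ → G → ℝ}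
    (hw : ∀ x, Tendsto (fun n => w n x) atTop (nhds 0)) (F : Finset G) {δ : ℝ} (hδ : 0 < δ) :
    ∀ᶠ n in atTop, L2 (cut F (w n)) δ := by
  have h : Tendsto (fun n => ∑ x ∈ F, (w n x) ^ 2) atTop (nhds (∑ x ∈ F, (0 : ℝ) ^ 2)) :=
    tendsto_finsetSum _ fun x _ => (hw x).pow 2
  simp only [ne_eq, OfNat.ofNat_ne_zero, not_false_eq_true, zero_pow, Finset.sum_const_zero] at h
  filter_upwards [h.eventually (gt_mem_nhds (by positivity : 0 < δ ^ 2))] with n hn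
  intro t
  refine le_trans ?_ hn.le
  calc ∑ x ∈ t, (cut F (w n) x) ^ 2 = ∑ x ∈ t with x ∈ F, (w n x) ^ 2 := by
        rw [Finset.sum_filter]
        refine Finset.sum_congr rfl fun z _ => ?_
        by_cases hz : z ∈ F <;> simp [cut, hz]
    _ ≤ _ := Finset.sum_le_sum_of_subset_of_nonneg
        (fun x hx => (Finset.mem_filter.1 hx).2) fun x _ _ => sq_nonneg _

/-- splitting for far apart supports -/
lemma KK_split_far [Group G] [DecidableEq G] (H : KD θ p Q k) {M : ℝ} (hM : 0 < M) {κ : ℝ} (hκ : 0 < κ)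
    {Z : Finset G}
    (hZ : LK (2 - θ) (fun z => if z ∈ Z then 0 else k z) κ) {u w v : G → ℝ}
    (hu : L2 u M) (hw : L2 w M) (hv : L2 v M) (hdis : ∀ x, u x = 0 ∨ w x = 0)
    (hfar : ∀ x y, x⁻¹ * y ∈ Z → (u y = 0 ∨ w x = 0) ∧ (w y = 0 ∨ u x = 0)) :
    |KK Q p (fun x => u x + w x) v - KK Q p u v - KK Q p w v| ≤
      2 * (κ * M ^ p * (M ^ (p - 1) * M)) := by
  have hp1 := H.p1
  have hp0 : p ≠ 0 := by linarith
  have hp10 : p - 1 ≠ 0 := by linarith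
  set Q' : G → G → ℝ := fun x y => if x⁻¹ * y ∈ Z then 0 else Q x y with hQ'
  have H' : KD θ p Q' (fun z => if z ∈ Z then 0 else k z) :=
    { h1 := H.h1, h2 := H.h2, hp := H.hp
      hk := fun z => by split_ifs; exacts [le_rfl, H.hk z]
      hs := by
        refine summable_of_sum_le (fun z => Real.rpow_nonneg ?_ _) hZ
        split_ifs; exacts [le_rfl, H.hk z]
      hQ0 := fun x y => by
        simp only [hQ']; split_ifs; exacts [le_rfl, H.hQ0 x y]
      hQ := fun x y => by
        simp only [hQ']; split_ifs; exacts [le_rfl, H.hQ x y] }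
  have b1 := Phi_sum H' hκ hZ hM hM hM hu hw hv
  have b2 := Phi_sum H' hκ hZ hM hM hM hw hu hv
  have hM2 : 0 < 2 * M := by linarith
  have huw := hu.add hw
  unfold KK
  rw [← (KS_summable H hM2 hM huw hv).tsum_sub (KS_summable H hM hM hu hv),
    ← ((KS_summable H hM2 hM huw hv).sub (KS_summable H hM hM hu hv)).tsum_sub
      (KS_summable H hM hM hw hv)]
  refine le_trans (tsum_abs_le (b1.1.hasSum.add b2.1.hasSum) fun z => ?_)
    (by linarith [b1.2, b2.2])
  have hA : |u z.2 + w z.2| ^ p = |u z.2| ^ p + |w z.2| ^ p := by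
    rcases hdis z.2 with h | h <;> simp [h, Real.zero_rpow hp0]
  have hB : Bf p (u z.1 + w z.1) = Bf p (u z.1) + Bf p (w z.1) := by
    rcases hdis z.1 with h | h <;> simp [h, Bf]
  have e : KS Q p (fun x => u x + w x) v z - KS Q p u v z - KS Q p w v z =
      Q z.1 z.2 * |u z.2| ^ p * (Bf p (w z.1) * v z.1)
        + Q z.1 z.2 * |w z.2| ^ p * (Bf p (u z.1) * v z.1) := by
    unfold KS; rw [hA, hB]; ring
  have gen : ∀ f g : G → ℝ, (z.1⁻¹ * z.2 ∈ Z → f z.2 = 0 ∨ g z.1 = 0) →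
      |Q z.1 z.2 * |f z.2| ^ p * (Bf p (g z.1) * v z.1)| = Phi Q' p f g v z := by
    intro f g hfg
    rw [abs_mul, abs_mul, abs_mul, abs_Bf hp1, abs_of_nonneg (H.hQ0 _ _),
      abs_of_nonneg (by positivity : 0 ≤ |f z.2| ^ p)]
    unfold Phi
    by_cases hz : z.1⁻¹ * z.2 ∈ Z
    · rcases hfg hz with h | h <;> simp [h, hQ', hz, Real.zero_rpow hp0, Real.zero_rpow hp10]
    · simp [hQ', hz]
  rw [e]
  refine (abs_add_le _ _).trans (le_of_eq ?_)
  rw [gen u w fun h => (hfar _ _ h).1, gen w u fun h => (hfar _ _ h).2]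

/-- Uniform Brezis-Lieb splitting. -/
lemma KK_split [Group G] [DecidableEq G] (H : KD θ p Q k) {M : ℝ} (hM : 0 < M) {u : G → ℝ} (hu : L2 u M)
    {w : ℕ → G → ℝ} (hwM : ∀ n, L2 (w n) M)
    (hw : ∀ x, Tendsto (fun n => w n x) atTop (nhds 0)) {ε : ℝ} (hε : 0 < ε) :
    ∀ᶠ n in atTop, ∀ v, L2 v M →
      |KK Q p (fun x => u x + w n x) v - KK Q p u v - KK Q p (w n) v| ≤ ε := by
  have hM2 : 0 < 2 * M := by linarith
  have lift : ∀ {f : G → ℝ}, L2 f M → L2 f (2 * M) := fun hf =>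
    hf.mono (fun _ => le_rfl) hM.le (by linarith)
  obtain ⟨δ, hδ, huc⟩ := KK_uc H hM2 (by positivity : 0 < ε / 4)
  obtain ⟨F, hF⟩ := hu.exists_cutc (half_pos hδ)
  set L := M ^ p * (M ^ (p - 1) * M) with hL
  have hL0 : 0 < L := by positivity
  obtain ⟨Z, hZ⟩ := H.tail (by positivity : 0 < ε / (8 * L))
  set F2 := F ∪ (Finset.image (fun q : G × G => q.1 * q.2⁻¹) (F ×ˢ Z) ∪
    Finset.image (fun q : G × G => q.1 * q.2) (F ×ˢ Z)) with hF2
  have lift2 : ∀ {f : G → ℝ}, L2 f (δ / 2) → L2 f δ := fun hf =>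
    hf.mono (fun _ => le_rfl) (by positivity) (by linarith)
  filter_upwards [L2_cut_eventually hw F2 (half_pos hδ)] with n hn v hv
  have hu' := hu.cut hM.le F
  have hw' := (hwM n).cutc hM.le F2
  have hfar := KK_split_far (u := cut F u) (w := cutc F2 (w n)) H hM (by positivity) hZ hu' hw' hv
    (fun x => by
      by_cases hx : x ∈ F
      · right; simp [cutc, hF2, hx]
      · left; simp [cut, hx])
    (fun x y hxy => by
      constructor
      · by_cases hy : y ∈ F
        · right
          have : x ∈ F2 := by
            refine Finset.mem_union_right _ (Finset.mem_union_left _ (Finset.mem_image.2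
              ⟨(y, x⁻¹ * y), Finset.mem_product.2 ⟨hy, hxy⟩, by simp⟩))
          simp [cutc, this]
        · left; simp [cut, hy]
      · by_cases hx : x ∈ F
        · left
          have : y ∈ F2 := by
            refine Finset.mem_union_right _ (Finset.mem_union_right _ (Finset.mem_image.2
              ⟨(x, x⁻¹ * y), Finset.mem_product.2 ⟨hx, hxy⟩, by simp⟩))
          simp [cutc, this]
        · right; simp [cut, hx])
  have hb : 2 * (ε / (8 * L) * M ^ p * (M ^ (p - 1) * M)) = ε / 4 := by
    have : ε / (8 * L) * M ^ p * (M ^ (p - 1) * M) = ε / (8 * L) * L := by rw [hL]; ring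
    rw [this]; field_simp; norm_num
  rw [hb] at hfar
  have c1 := huc (fun x => u x + w n x) (fun x => cut F u x + cutc F2 (w n) x) v
    (hu.add (hwM n)) (hu'.add hw') (by
      have := (hF.add hn)
      rw [mul_div_cancel₀ _ (two_ne_zero)] at this
      refine this.mono (fun x => le_of_eq ?_) hδ.le le_rfl
      congr 1
      rw [← cut_add F u x, ← cut_add F2 (w n) x]
      ring) (lift hv)
  have c2 := huc u (cut F u) v (lift hu) (lift hu') (by
      refine (lift2 hF).mono (fun x => le_of_eq ?_) hδ.le le_rfl
      congr 1
      rw [← cut_add F u x]; ring) (lift hv)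
  have c3 := huc (w n) (cutc F2 (w n)) v (lift (hwM n)) (lift hw') (by
      refine (lift2 hn).mono (fun x => le_of_eq ?_) hδ.le le_rfl
      congr 1
      rw [← cut_add F2 (w n) x]; ring) (lift hv)
  rw [abs_le] at *
  constructor <;> linarith [c1.1, c1.2, c2.1, c2.2, c3.1, c3.2, hfar.1, hfar.2]

/-- pairing against a fixed function -/
lemma KK_fixed_right [Group G] [DecidableEq G] (H : KD θ p Q k) {M : ℝ} (hM : 0 < M) {v : G → ℝ}
    (hv : L2 v M) {w : ℕ → G → ℝ} (hwM : ∀ n, L2 (w n) M)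
    (hw : ∀ x, Tendsto (fun n => w n x) atTop (nhds 0)) :
    Tendsto (fun n => KK Q p (w n) v) atTop (nhds 0) := by
  obtain ⟨κ, hκ, hK⟩ := H.exists_LK
  have hp1 := H.p1
  rw [Metric.tendsto_nhds]
  intro ε hε
  obtain ⟨δ, hδ, hsm⟩ := small_delta hp1 M κ hε
  obtain ⟨F, hF⟩ := hv.exists_cutc hδ
  filter_upwards [L2_cut_eventually hw F hδ] with n hn
  rw [dist_zero_right]
  have b1 := Phi_sum H hκ hK hM hδ hM (hwM n) hn hv
  have b2 := Phi_sum H hκ hK hM hM hδ (hwM n) (hwM n) hF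
  refine lt_of_le_of_lt (le_trans (tsum_abs_le (b1.1.hasSum.add b2.1.hasSum) fun z => ?_)
    (add_le_add b1.2 b2.2)) hsm
  rw [abs_KS hp1 H.hQ0]
  by_cases hz : z.1 ∈ F <;> simp [Phi, cut, cutc, hz, Real.zero_rpow (by linarith : p - 1 ≠ 0)]

/-- pairing of a fixed function against a weakly null sequence -/
lemma KK_fixed_left [Group G] [DecidableEq G] (H : KD θ p Q k) {M : ℝ} (hM : 0 < M) {u : G → ℝ}
    (hu : L2 u M) {w : ℕ → G → ℝ} (hwM : ∀ n, L2 (w n) M)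
    (hw : ∀ x, Tendsto (fun n => w n x) atTop (nhds 0)) :
    Tendsto (fun n => KK Q p u (w n)) atTop (nhds 0) := by
  obtain ⟨κ, hκ, hK⟩ := H.exists_LK
  have hp1 := H.p1
  rw [Metric.tendsto_nhds]
  intro ε hε
  obtain ⟨δ, hδ, hsm⟩ := small_delta hp1 M κ hε
  obtain ⟨F, hF⟩ := hu.exists_cutc hδ
  filter_upwards [L2_cut_eventually hw F hδ] with n hn
  rw [dist_zero_right]
  have b1 := Phi_sum H hκ hK hM hδ hM hu hF (hwM n)
  have b2 := Phi_sum H hκ hK hM hM hδ hu hu hn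
  refine lt_of_le_of_lt (le_trans (tsum_abs_le (b1.1.hasSum.add b2.1.hasSum) fun z => ?_)
    (add_le_add b1.2 b2.2)) hsm
  rw [abs_KS hp1 H.hQ0]
  by_cases hz : z.1 ∈ F <;> simp [Phi, cut, cutc, hz, Real.zero_rpow (by linarith : p - 1 ≠ 0)]

end K

/-- density of the inner product -/
def qd [Group G] (S : Finset G) (a : G → ℝ) (lam : ℝ) (u v : G → ℝ) (x : G) : ℝ :=
  lap S u x * lap S v x + grad S u v x + (1 + lam * a x) * (u x * v x)

lemma lap_lin [Group G] (S : Finset G) (u v : G → ℝ) (c d : ℝ) (x : G) :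
    lap S (fun y => c * u y + d * v y) x = c * lap S u x + d * lap S v x := by
  unfold lap
  rw [Finset.mul_sum, Finset.mul_sum, ← Finset.sum_add_distrib]
  exact Finset.sum_congr rfl fun s _ => by ring

lemma grad_lin_left [Group G] (S : Finset G) (u v f : G → ℝ) (c d : ℝ) (x : G) :
    grad S (fun y => c * u y + d * v y) f x = c * grad S u f x + d * grad S v f x := by
  unfold grad
  have e : ∑ s ∈ S, (c * u (x * s) + d * v (x * s) - (c * u x + d * v x)) * (f (x * s) - f x) =
      c * ∑ s ∈ S, (u (x * s) - u x) * (f (x * s) - f x)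
        + d * ∑ s ∈ S, (v (x * s) - v x) * (f (x * s) - f x) := by
    rw [Finset.mul_sum, Finset.mul_sum, ← Finset.sum_add_distrib]
    exact Finset.sum_congr rfl fun s _ => by ring
  rw [e]; ring

lemma grad_comm [Group G] (S : Finset G) (u v : G → ℝ) (x : G) : grad S u v x = grad S v u x := by
  unfold grad
  exact congrArg _ (Finset.sum_congr rfl fun s _ => by ring)

lemma qd_comm [Group G] (S : Finset G) (a : G → ℝ) (lam : ℝ) (u v : G → ℝ) (x : G) :
    qd S a lam u v x = qd S a lam v u x := by
  unfold qd; rw [grad_comm]; ring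

lemma qd_lin_left [Group G] (S : Finset G) (a : G → ℝ) (lam : ℝ) (u v f : G → ℝ) (c d : ℝ) (x : G) :
    qd S a lam (fun y => c * u y + d * v y) f x = c * qd S a lam u f x + d * qd S a lam v f x := by
  unfold qd; rw [lap_lin, grad_lin_left]; ring

lemma qd_self [Group G] (S : Finset G) (a : G → ℝ) (lam : ℝ) (u : G → ℝ) (x : G) :
    qd S a lam u u x = eDensity S a lam u x := by
  unfold qd eDensity; ring

lemma ed_lin [Group G] (S : Finset G) (a : G → ℝ) (lam : ℝ) (u v : G → ℝ) (c d : ℝ) (x : G) :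
    eDensity S a lam (fun y => c * u y + d * v y) x =
      c ^ 2 * eDensity S a lam u x + 2 * c * d * qd S a lam u v x + d ^ 2 * eDensity S a lam v x := by
  rw [← qd_self, qd_lin_left, qd_comm S a lam u, qd_comm S a lam v, qd_lin_left, qd_lin_left,
    qd_self, qd_self, qd_comm S a lam v u]
  ring

lemma sq_le_ed [Group G] (S : Finset G) {a : G → ℝ} (ha : ∀ x, 0 ≤ a x) {lam : ℝ} (hl : 0 < lam)
    (u : G → ℝ) (x : G) : u x ^ 2 ≤ eDensity S a lam u x := by
  unfold eDensity
  have h1 : 0 ≤ grad S u u x := by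
    unfold grad
    exact mul_nonneg (by norm_num) (Finset.sum_nonneg fun s _ => mul_self_nonneg _)
  have h2 : 0 ≤ lam * a x * u x ^ 2 := mul_nonneg (mul_nonneg hl.le (ha x)) (sq_nonneg _)
  nlinarith [sq_nonneg (lap S u x)]

section E
variable [Group G] {S : Finset G} {a : G → ℝ} {lam : ℝ}

lemma ed_nonneg (ha : ∀ x, 0 ≤ a x) (hl : 0 < lam)
    (u : G → ℝ) (x : G) : 0 ≤ eDensity S a lam u x :=
  (sq_nonneg _).trans (sq_le_ed S ha hl u x)

lemma abs_qd_le (ha : ∀ x, 0 ≤ a x) (hl : 0 < lam) {η : ℝ} (hη : 0 < η)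
    (u v : G → ℝ) (x : G) :
    |qd S a lam u v x| ≤ η / 2 * eDensity S a lam u x + 1 / (2 * η) * eDensity S a lam v x := by
  have h1 := ed_nonneg (S := S) ha hl (fun y => η * u y + 1 * v y) x
  have h2 := ed_nonneg (S := S) ha hl (fun y => η * u y + (-1) * v y) x
  rw [ed_lin] at h1 h2
  have e : η / 2 * eDensity S a lam u x + 1 / (2 * η) * eDensity S a lam v x =
      (η ^ 2 * eDensity S a lam u x + eDensity S a lam v x) / (2 * η) := by
    field_simp
  rw [e, le_div_iff₀ (by positivity)]
  rcases abs_cases (qd S a lam u v x) with ⟨h, _⟩ | ⟨h, _⟩ <;> rw [h] <;> nlinarith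

lemma qd_summable (ha : ∀ x, 0 ≤ a x) (hl : 0 < lam) {u v : G → ℝ}
    (hu : MemE S a lam u) (hv : MemE S a lam v) : Summable (qd S a lam u v) :=
  Summable.of_norm_bounded ((hu.mul_left (1 / 2)).add (hv.mul_left (1 / (2 * 1))))
    fun x => abs_qd_le ha hl one_pos u v x

lemma innerE_le (ha : ∀ x, 0 ≤ a x) (hl : 0 < lam) {u v : G → ℝ}
    (hu : MemE S a lam u) (hv : MemE S a lam v) :
    |innerE S a lam u v| ≤ 1 / 2 * normEsq S a lam u + 1 / (2 * 1) * normEsq S a lam v :=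
  tsum_abs_le ((hu.hasSum.mul_left (1 / 2)).add (hv.hasSum.mul_left (1 / (2 * 1))))
    fun x => abs_qd_le ha hl one_pos u v x

lemma memE_lin (ha : ∀ x, 0 ≤ a x) (hl : 0 < lam) {u v : G → ℝ}
    (hu : MemE S a lam u) (hv : MemE S a lam v) (c d : ℝ) :
    MemE S a lam (fun x => c * u x + d * v x) := by
  refine (((hu.mul_left (c ^ 2)).add ((qd_summable ha hl hu hv).mul_left (2 * c * d))).add
    (hv.mul_left (d ^ 2))).congr fun x => (ed_lin S a lam u v c d x).symm

lemma normEsq_lin (ha : ∀ x, 0 ≤ a x) (hl : 0 < lam) {u v : G → ℝ}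
    (hu : MemE S a lam u) (hv : MemE S a lam v) (c d : ℝ) :
    normEsq S a lam (fun x => c * u x + d * v x) = c ^ 2 * normEsq S a lam u
      + 2 * c * d * innerE S a lam u v + d ^ 2 * normEsq S a lam v := by
  have h := ((hu.hasSum.mul_left (c ^ 2)).add
    ((qd_summable ha hl hu hv).hasSum.mul_left (2 * c * d))).add (hv.hasSum.mul_left (d ^ 2))
  exact (tsum_congr fun x => ed_lin S a lam u v c d x).trans h.tsum_eq

lemma innerE_comm (u v : G → ℝ) : innerE S a lam u v = innerE S a lam v u :=
  tsum_congr fun x => qd_comm S a lam u v x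

lemma innerE_lin_left (ha : ∀ x, 0 ≤ a x) (hl : 0 < lam) {u v f : G → ℝ}
    (hu : MemE S a lam u) (hv : MemE S a lam v) (hf : MemE S a lam f) (c d : ℝ) :
    innerE S a lam (fun x => c * u x + d * v x) f =
      c * innerE S a lam u f + d * innerE S a lam v f :=
  (tsum_congr fun x => qd_lin_left S a lam u v f c d x).trans
    (((qd_summable ha hl hu hf).hasSum.mul_left c).add
      ((qd_summable ha hl hv hf).hasSum.mul_left d)).tsum_eq

lemma innerE_self (u : G → ℝ) : innerE S a lam u u = normEsq S a lam u :=
  tsum_congr fun x => qd_self S a lam u x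

lemma normEsq_nonneg (ha : ∀ x, 0 ≤ a x) (hl : 0 < lam) (u : G → ℝ) : 0 ≤ normEsq S a lam u :=
  tsum_nonneg (ed_nonneg ha hl u)

lemma memE_L2 (ha : ∀ x, 0 ≤ a x) (hl : 0 < lam) {u : G → ℝ} {M : ℝ}
    (hu : MemE S a lam u) (hM : normEsq S a lam u ≤ M ^ 2) : L2 u M := fun t =>
  (Finset.sum_le_sum fun x _ => sq_le_ed S ha hl u x).trans
    ((hu.sum_le_tsum t fun x _ => ed_nonneg ha hl u x).trans hM)

lemma tendsto_lap {U : ℕ → G → ℝ} {u : G → ℝ} (h : ∀ x, Tendsto (fun n => U n x) atTop (nhds (u x)))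
    (x : G) : Tendsto (fun n => lap S (U n) x) atTop (nhds (lap S u x)) :=
  tendsto_finsetSum _ fun _ _ => (h _).sub (h _)

lemma tendsto_qd {U : ℕ → G → ℝ} {u : G → ℝ} (h : ∀ x, Tendsto (fun n => U n x) atTop (nhds (u x)))
    {V : ℕ → G → ℝ} {v : G → ℝ} (h' : ∀ x, Tendsto (fun n => V n x) atTop (nhds (v x)))
    (x : G) : Tendsto (fun n => qd S a lam (U n) (V n) x) atTop (nhds (qd S a lam u v x)) := by
  unfold qd grad
  refine (((tendsto_lap h x).mul (tendsto_lap h' x)).add (Tendsto.const_mul _ ?_)).add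
    (Tendsto.const_mul _ ((h x).mul (h' x)))
  exact tendsto_finsetSum _ fun _ _ => ((h _).sub (h _)).mul ((h' _).sub (h' _))

lemma fatou (ha : ∀ x, 0 ≤ a x) (hl : 0 < lam) {U : ℕ → G → ℝ} {u : G → ℝ}
    (h : ∀ x, Tendsto (fun n => U n x) atTop (nhds (u x))) {C : ℝ}
    (hU : ∀ n, MemE S a lam (U n)) (hC : ∀ n, normEsq S a lam (U n) ≤ C) :
    MemE S a lam u ∧ normEsq S a lam u ≤ C := by
  have key : ∀ t : Finset G, ∑ x ∈ t, eDensity S a lam u x ≤ C := by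
    intro t
    have h1 : Tendsto (fun n => ∑ x ∈ t, eDensity S a lam (U n) x) atTop
        (nhds (∑ x ∈ t, eDensity S a lam u x)) := by
      simp only [← qd_self]
      exact tendsto_finsetSum _ fun x _ => tendsto_qd h h x
    exact le_of_tendsto h1 (Eventually.of_forall fun n =>
      ((hU n).sum_le_tsum t fun x _ => ed_nonneg ha hl _ x).trans (hC n))
  exact ⟨summable_of_sum_le (ed_nonneg ha hl u) key,
    Real.tsum_le_of_sum_le (ed_nonneg ha hl u) key⟩

lemma weak_inner (ha : ∀ x, 0 ≤ a x) (hl : 0 < lam) {w : ℕ → G → ℝ} {v : G → ℝ}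
    (h : ∀ x, Tendsto (fun n => w n x) atTop (nhds 0)) {C : ℝ}
    (hw : ∀ n, MemE S a lam (w n)) (hC : ∀ n, normEsq S a lam (w n) ≤ C) (hv : MemE S a lam v) :
    Tendsto (fun n => innerE S a lam (w n) v) atTop (nhds 0) := by
  classical
  rw [Metric.tendsto_nhds]
  intro ε hε
  have hC0 : 0 ≤ C := (normEsq_nonneg ha hl _).trans (hC 0)
  set η := ε / (2 * (C + 1)) with hη
  have hη0 : 0 < η := by positivity
  obtain ⟨F, hF⟩ := summable_iff_vanishing_norm.1 hv (η * ε / 2) (by positivity)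
  have hfin : Tendsto (fun n => ∑ x ∈ F, |qd S a lam (w n) v x|) atTop (nhds 0) := by
    have h0 : ∀ x, qd S a lam (fun _ => (0 : ℝ)) v x = 0 := fun x => by simp [qd, lap, grad]
    have hx : ∀ x, Tendsto (fun n => |qd S a lam (w n) v x|) atTop (nhds 0) := fun x => by
      have e := tendsto_qd (S := S) (a := a) (lam := lam) (V := fun _ => v) (v := v) (U := w)
        (u := fun _ => (0 : ℝ)) h (fun _ => tendsto_const_nhds) x
      rw [h0] at e
      simpa using e.abs
    have e := tendsto_finsetSum F fun x _ => hx x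
    simpa using e
  filter_upwards [hfin.eventually (gt_mem_nhds (by positivity : 0 < ε / 4))] with n hn
  rw [dist_zero_right, Real.norm_eq_abs]
  have hsum := (qd_summable ha hl (hw n) hv).abs
  have h1 : |innerE S a lam (w n) v| ≤ ∑' x, |qd S a lam (w n) v x| :=
    tsum_abs_le hsum.hasSum fun x => le_rfl
  have h2 : ∑' x, |qd S a lam (w n) v x| ≤ ε / 4 + (η / 2 * C + 1 / (2 * η) * (η * ε / 2)) := by
    refine Real.tsum_le_of_sum_le (fun x => abs_nonneg _) fun t => ?_
    have e1 : ∑ x ∈ t, |qd S a lam (w n) v x| ≤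
        ∑ x ∈ F, |qd S a lam (w n) v x| + ∑ x ∈ t \ F, |qd S a lam (w n) v x| := by
      rw [← Finset.sum_union Finset.disjoint_sdiff]
      refine Finset.sum_le_sum_of_subset_of_nonneg ?_ fun _ _ _ => abs_nonneg _
      intro x hx
      by_cases hxF : x ∈ F <;> simp [hx, hxF]
    have e2 : ∑ x ∈ t \ F, |qd S a lam (w n) v x| ≤
        η / 2 * ∑ x ∈ t \ F, eDensity S a lam (w n) x
          + 1 / (2 * η) * ∑ x ∈ t \ F, eDensity S a lam v x := by
      rw [Finset.mul_sum, Finset.mul_sum, ← Finset.sum_add_distrib]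
      exact Finset.sum_le_sum fun x _ => abs_qd_le ha hl hη0 _ _ x
    have e3 := ((hw n).sum_le_tsum (t \ F) fun x _ => ed_nonneg ha hl _ x).trans (hC n)
    have e4 := (le_abs_self _).trans (hF (t \ F) Finset.sdiff_disjoint).le
    have e5 : η / 2 * ∑ x ∈ t \ F, eDensity S a lam (w n) x ≤ η / 2 * C := by gcongr
    have e6 : 1 / (2 * η) * ∑ x ∈ t \ F, eDensity S a lam v x ≤ 1 / (2 * η) * (η * ε / 2) := by
      gcongr
    linarith
  have h3 : 1 / (2 * η) * (η * ε / 2) = ε / 4 := by field_simp; norm_num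
  have h4 : η / 2 * C ≤ ε / 4 := by
    have : η * (C + 1) = ε / 2 := by rw [hη]; field_simp
    nlinarith
  linarith

end E

lemma Kterm_eq [Group G] [DecidableEq G] {θ p : ℝ} {R : G → G → ℝ} {k : G → ℝ}
    (H : KD θ p (fun x y => if y = x then 0 else R x y) k) {u v : G → ℝ} {A D : ℝ}
    (hA : 0 < A) (hD : 0 < D) (hu : L2 u A) (hv : L2 v D) :
    Kterm R p u v = KK (fun x y => if y = x then 0 else R x y) p u v := by
  unfold KK
  rw [(KS_summable H hA hD hu hv).tsum_prod]
  unfold Kterm conv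
  refine tsum_congr fun x => ?_
  rw [← tsum_mul_right]
  refine tsum_congr fun y => ?_
  unfold KS Bf
  by_cases hyx : y = x
  · simp [hyx]
  · simp only [hyx, if_false]

lemma Dterm_eq [DecidableEq G] {p : ℝ} (hp : 1 < p) (R : G → G → ℝ) (u : G → ℝ) :
    Dterm R p u = Kterm R p u u := by
  unfold Dterm Kterm
  refine tsum_congr fun x => ?_
  rw [← Bf_mul_self hp, Bf]


section F
variable [Group G] [DecidableEq G] {S : Finset G} {a : G → ℝ} {lam : ℝ}
variable {θ p : ℝ} {R : G → G → ℝ} {k : G → ℝ}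

/-- off-diagonal kernel -/
abbrev Qf (R : G → G → ℝ) : G → G → ℝ := fun x y => if y = x then 0 else R x y

lemma memE_exL2 (ha : ∀ x, 0 ≤ a x) (hl : 0 < lam) {u : G → ℝ} (hu : MemE S a lam u) :
    ∃ A : ℝ, 0 < A ∧ L2 u A := by
  have h0 := normEsq_nonneg (S := S) ha hl u
  refine ⟨normEsq S a lam u + 1, by positivity, memE_L2 ha hl hu ?_⟩
  nlinarith

lemma Jd_eq (H : KD θ p (Qf R) k) (ha : ∀ x, 0 ≤ a x) (hl : 0 < lam) {u v : G → ℝ}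
    (hu : MemE S a lam u) (hv : MemE S a lam v) :
    Jd S a lam R p u v = innerE S a lam u v - KK (Qf R) p u v := by
  obtain ⟨A, hA, hA'⟩ := memE_exL2 ha hl hu
  obtain ⟨D, hD, hD'⟩ := memE_exL2 ha hl hv
  unfold Jd
  rw [Kterm_eq H hA hD hA' hD']

lemma Jfun_eq (H : KD θ p (Qf R) k) (ha : ∀ x, 0 ≤ a x) (hl : 0 < lam) {u : G → ℝ}
    (hu : MemE S a lam u) :
    Jfun S a lam R p u = 1 / 2 * normEsq S a lam u - 1 / (2 * p) * KK (Qf R) p u u := by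
  obtain ⟨A, hA, hA'⟩ := memE_exL2 ha hl hu
  unfold Jfun
  rw [Dterm_eq H.p1, Kterm_eq H hA hA hA' hA']

lemma le_dual (H : KD θ p (Qf R) k) (ha : ∀ x, 0 ≤ a x) (hl : 0 < lam) {u v : G → ℝ}
    (hu : MemE S a lam u) (hv : MemE S a lam v) (hv1 : normEsq S a lam v ≤ 1) :
    |Jd S a lam R p u v| ≤ dualNorm S a lam R p u := by
  obtain ⟨A, hA, hA'⟩ := memE_exL2 ha hl hu
  obtain ⟨κ, hκ, hK⟩ := H.exists_LK
  unfold dualNorm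
  refine le_csSup ⟨1 / 2 * normEsq S a lam u + 1 / 2 + κ * A ^ p * (A ^ (p - 1) * 1), ?_⟩
    ⟨v, hv, hv1, rfl⟩
  rintro t ⟨f, hf, hf1, rfl⟩
  rw [Jd_eq H ha hl hu hf]
  have h1 := innerE_le ha hl hu hf
  have h2 := KK_bound H hκ hK hA one_pos hA' (memE_L2 ha hl hf (M := 1) (by simpa using hf1))
  have h3 := abs_sub (innerE S a lam u f) (KK (Qf R) p u f)
  linarith

lemma dual_nonneg (u : G → ℝ) : 0 ≤ dualNorm S a lam R p u := by
  unfold dualNorm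
  refine Real.sSup_nonneg ?_
  rintro t ⟨f, _, _, rfl⟩
  exact abs_nonneg _

lemma dual_le {u : G → ℝ} {C : ℝ} (hC : 0 ≤ C)
    (h : ∀ v, MemE S a lam v → normEsq S a lam v ≤ 1 → |Jd S a lam R p u v| ≤ C) :
    dualNorm S a lam R p u ≤ C := by
  unfold dualNorm
  refine Real.sSup_le ?_ hC
  rintro t ⟨f, h1, h2, rfl⟩
  exact h f h1 h2

lemma normEsq_smul (ha : ∀ x, 0 ≤ a x) (hl : 0 < lam) {u : G → ℝ}
    (hu : MemE S a lam u) (c : ℝ) :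
    MemE S a lam (fun x => c * u x) ∧
      normEsq S a lam (fun x => c * u x) = c ^ 2 * normEsq S a lam u := by
  have e : (fun x => c * u x) = fun x => c * u x + 0 * u x := by funext x; ring
  rw [e]
  refine ⟨memE_lin ha hl hu hu c 0, ?_⟩
  rw [normEsq_lin ha hl hu hu]; ring

lemma Jd_self_le (H : KD θ p (Qf R) k) (ha : ∀ x, 0 ≤ a x) (hl : 0 < lam) {u : G → ℝ}
    (hu : MemE S a lam u) :
    |Jd S a lam R p u u| ≤ dualNorm S a lam R p u * (normEsq S a lam u + 1) ∧
    |Jd S a lam R p u u| ≤ dualNorm S a lam R p u * (Real.sqrt (normEsq S a lam u) + 1) := by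
  have key : ∀ t : ℝ, 0 < t → normEsq S a lam u ≤ t ^ 2 →
      |Jd S a lam R p u u| ≤ dualNorm S a lam R p u * t := by
    intro t ht hn
    obtain ⟨h1, h2⟩ := normEsq_smul ha hl hu t⁻¹
    have h3 := le_dual H ha hl hu h1 (by
      rw [h2, inv_pow, inv_mul_le_iff₀ (by positivity)]; linarith)
    have h4 : innerE S a lam u (fun x => t⁻¹ * u x) = t⁻¹ * innerE S a lam u u := by
      rw [innerE_comm]
      have e : (fun x => t⁻¹ * u x) = fun x => t⁻¹ * u x + 0 * u x := by funext x; ring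
      rw [e, innerE_lin_left ha hl hu hu hu]; ring
    rw [Jd_eq H ha hl hu h1, KK_smul, h4, ← mul_sub, ← Jd_eq H ha hl hu hu, abs_mul,
      abs_of_pos (by positivity : 0 < t⁻¹), inv_mul_le_iff₀ ht] at h3
    linarith
  have h0 := normEsq_nonneg (S := S) ha hl u
  refine ⟨key _ (by positivity) (by nlinarith), key _ (by positivity) ?_⟩
  nlinarith [Real.sq_sqrt h0, Real.sqrt_nonneg (normEsq S a lam u)]

lemma PS_bdd (H : KD θ p (Qf R) k) (ha : ∀ x, 0 ≤ a x) (hl : 0 < lam) {c : ℝ} {U : ℕ → G → ℝ}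
    (hU : PSseq S a lam R p c U) : ∃ M : ℝ, 1 ≤ M ∧ ∀ n, normEsq S a lam (U n) ≤ M ^ 2 := by
  obtain ⟨hm, hJ, hd⟩ := hU
  obtain ⟨C1, hC1⟩ := hJ.bddAbove_range
  obtain ⟨C2, hC2⟩ := hd.bddAbove_range
  have hp := H.p1
  set σ := 1 / 2 - 1 / (2 * p) with hσ
  have hσ0 : 0 < σ := by
    rw [hσ, sub_pos]
    exact one_div_lt_one_div_of_lt (by norm_num) (by linarith)
  have hp0 : 0 < 1 / (2 * p) := by positivity
  have hp1 : 1 / (2 * p) ≤ 1 := by rw [div_le_one (by positivity)]; linarith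
  have hC20 : 0 ≤ C2 := (dual_nonneg (U 0)).trans (hC2 ⟨0, rfl⟩)
  set D := |C1| + C2 with hD
  have hD0 : 0 ≤ D := by positivity
  refine ⟨D / σ + C2 / σ + 1, ?_, fun n => ?_⟩
  · have : 0 ≤ D / σ + C2 / σ := by positivity
    linarith
  have h1 : Jfun S a lam R p (U n) ≤ |C1| := (hC1 ⟨n, rfl⟩).trans (le_abs_self _)
  have h2 : dualNorm S a lam R p (U n) ≤ C2 := hC2 ⟨n, rfl⟩
  have h3 := (Jd_self_le H ha hl (hm n)).2
  have h0 := normEsq_nonneg (S := S) ha hl (U n)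
  set s := Real.sqrt (normEsq S a lam (U n)) with hs
  have hs0 : 0 ≤ s := Real.sqrt_nonneg _
  have hs2 : s ^ 2 = normEsq S a lam (U n) := Real.sq_sqrt h0
  have h4 : σ * s ^ 2 = Jfun S a lam R p (U n) - 1 / (2 * p) * Jd S a lam R p (U n) (U n) := by
    rw [Jfun_eq H ha hl (hm n), Jd_eq H ha hl (hm n) (hm n), innerE_self, hs2, hσ]; ring
  have h5 : |Jd S a lam R p (U n) (U n)| ≤ C2 * (s + 1) :=
    h3.trans (mul_le_mul_of_nonneg_right h2 (by positivity))
  have h6 : -(1 / (2 * p) * Jd S a lam R p (U n) (U n)) ≤ C2 * (s + 1) := by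
    have e1 := neg_abs_le (Jd S a lam R p (U n) (U n))
    have e2 : 1 / (2 * p) * |Jd S a lam R p (U n) (U n)| ≤ 1 * |Jd S a lam R p (U n) (U n)| :=
      mul_le_mul_of_nonneg_right hp1 (abs_nonneg _)
    have e3 : 1 / (2 * p) * -|Jd S a lam R p (U n) (U n)| ≤ 1 / (2 * p) * Jd S a lam R p (U n) (U n) :=
      mul_le_mul_of_nonneg_left e1 hp0.le
    linarith
  have h7 : σ * s ^ 2 ≤ D + C2 * s := by rw [hD]; linarith
  rw [← hs2]
  refine pow_le_pow_left₀ hs0 ?_ 2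
  by_contra hcon
  push Not at hcon
  have h8 : D + C2 + σ < σ * s := by
    have := mul_lt_mul_of_pos_left hcon hσ0
    have e : σ * (D / σ + C2 / σ + 1) = D + C2 + σ := by field_simp
    linarith
  have h9 : 1 ≤ s := by
    have : 0 ≤ D / σ + C2 / σ := by positivity
    linarith
  nlinarith [mul_le_mul_of_nonneg_left h9 hD0, mul_le_mul_of_nonneg_left h8.le hs0]

lemma exists_subseq [Countable G] {U : ℕ → G → ℝ} {M : ℝ} (h : ∀ n x, |U n x| ≤ M) :
    ∃ φ : ℕ → ℕ, StrictMono φ ∧ ∃ u : G → ℝ,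
      ∀ x, Tendsto (fun n => U (φ n) x) atTop (nhds (u x)) := by
  have hc : IsCompact (Set.pi Set.univ (fun _ : G => Set.Icc (-M) M)) :=
    isCompact_univ_pi fun _ => isCompact_Icc
  obtain ⟨u, _, φ, hφ, hu⟩ := hc.tendsto_subseq (x := U) fun n x _ => abs_le.1 (h n x)
  exact ⟨φ, hφ, u, fun x => (tendsto_pi_nhds.1 hu) x⟩

lemma splitting_core (H : KD θ p (Qf R) k) (ha : ∀ x, 0 ≤ a x) (hl : 0 < lam) {c : ℝ}
    {V w : ℕ → G → ℝ} {u : G → ℝ} {M : ℝ} (hM : 1 ≤ M)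
    (hV : ∀ n, MemE S a lam (V n)) (hu : MemE S a lam u)
    (hVM : ∀ n, normEsq S a lam (V n) ≤ M ^ 2) (huM : normEsq S a lam u ≤ M ^ 2)
    (hJ : Tendsto (fun n => Jfun S a lam R p (V n)) atTop (nhds c))
    (hd : Tendsto (fun n => dualNorm S a lam R p (V n)) atTop (nhds 0))
    (hw : ∀ n, w n = fun x => 1 * V n x + (-1) * u x)
    (hw0 : ∀ x, Tendsto (fun n => w n x) atTop (nhds 0)) :
    Tendsto (fun n => Jfun S a lam R p (w n)) atTop (nhds (c - Jfun S a lam R p u)) ∧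
      Tendsto (fun n => dualNorm S a lam R p (w n)) atTop (nhds 0) := by
  have hwE : ∀ n, MemE S a lam (w n) := fun n => by rw [hw]; exact memE_lin ha hl (hV n) hu _ _
  have hwM : ∀ n, normEsq S a lam (w n) ≤ (2 * M) ^ 2 := fun n => by
    rw [hw, normEsq_lin ha hl (hV n) hu]
    have h1 := innerE_le ha hl (hV n) hu
    have h2 := neg_abs_le (innerE S a lam (V n) u)
    nlinarith [hVM n]
  have hM2 : 0 < 2 * M := by linarith
  have hMM : M ^ 2 ≤ (2 * M) ^ 2 := by nlinarith
  have hVL : ∀ n, L2 (V n) (2 * M) := fun n => memE_L2 ha hl (hV n) ((hVM n).trans hMM)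
  have huL : L2 u (2 * M) := memE_L2 ha hl hu (huM.trans hMM)
  have hwL : ∀ n, L2 (w n) (2 * M) := fun n => memE_L2 ha hl (hwE n) (hwM n)
  have hvL : ∀ v, MemE S a lam v → normEsq S a lam v ≤ 1 → L2 v (2 * M) := fun v h1 h2 =>
    memE_L2 ha hl h1 (h2.trans (by nlinarith))
  have hVw : ∀ n, V n = fun x => u x + w n x := fun n => by
    rw [hw]; funext x; ring
  have hsplit : ∀ ε : ℝ, 0 < ε → ∀ᶠ n in atTop, ∀ v, L2 v (2 * M) →
      |KK (Qf R) p (V n) v - KK (Qf R) p u v - KK (Qf R) p (w n) v| ≤ ε := fun ε hε => by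
    have := KK_split H hM2 huL hwL hw0 hε
    simpa only [hVw] using this
  have hinn : ∀ n, ∀ v, MemE S a lam v →
      innerE S a lam (w n) v = innerE S a lam (V n) v - innerE S a lam u v := fun n v hv => by
    rw [hw, innerE_lin_left ha hl (hV n) hu hv]; ring
  -- splitting for a fixed or varying test function
  have hsv : ∀ f : ℕ → G → ℝ, (∀ n, L2 (f n) (2 * M)) → Tendsto (fun n =>
      KK (Qf R) p (V n) (f n) - KK (Qf R) p u (f n) - KK (Qf R) p (w n) (f n)) atTop (nhds 0) := by
    intro f hf
    rw [Metric.tendsto_nhds]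
    intro ε hε
    filter_upwards [hsplit (ε / 2) (by positivity)] with n hn
    rw [dist_zero_right, Real.norm_eq_abs]
    linarith [hn (f n) (hf n)]
  constructor
  · have e : ∀ n, Jfun S a lam R p (w n) = Jfun S a lam R p (V n) - Jfun S a lam R p u
        - innerE S a lam (w n) u + 1 / (2 * p) *
          ((KK (Qf R) p (V n) (V n) - KK (Qf R) p u (V n) - KK (Qf R) p (w n) (V n))
            + KK (Qf R) p u (w n) + KK (Qf R) p (w n) u) := by
      intro n
      have e1 : KK (Qf R) p u (V n) = KK (Qf R) p u u + KK (Qf R) p u (w n) := by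
        rw [hVw]; exact KK_add H hM2 hM2 huL huL (hwL n)
      have e2 : KK (Qf R) p (w n) (V n) = KK (Qf R) p (w n) u + KK (Qf R) p (w n) (w n) := by
        conv_lhs => rw [hVw]
        exact KK_add H hM2 hM2 (hwL n) huL (hwL n)
      have e3 : normEsq S a lam (w n) = normEsq S a lam (V n) - 2 * innerE S a lam (V n) u
          + normEsq S a lam u := by
        rw [hw, normEsq_lin ha hl (hV n) hu]; ring
      rw [Jfun_eq H ha hl (hwE n), Jfun_eq H ha hl (hV n), Jfun_eq H ha hl hu, e1, e2,
        hinn n u hu, innerE_self, e3]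
      ring
    simp only [e]
    have t := (((hJ.sub_const (Jfun S a lam R p u)).sub (weak_inner ha hl hw0 hwE hwM hu)).add
      ((((hsv V hVL).add (KK_fixed_left H hM2 huL hwL hw0)).add
        (KK_fixed_right H hM2 huL hwL hw0)).const_mul (1 / (2 * p))))
    simpa using t
  · have hJd : ∀ n v, MemE S a lam v → Jd S a lam R p (w n) v = Jd S a lam R p (V n) v
        - Jd S a lam R p u v +
        (KK (Qf R) p (V n) v - KK (Qf R) p u v - KK (Qf R) p (w n) v) := fun n v hv => by
      rw [Jd_eq H ha hl (hwE n) hv, Jd_eq H ha hl (hV n) hv, Jd_eq H ha hl hu hv, hinn n v hv]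
      ring
    have hcrit : ∀ v, MemE S a lam v → normEsq S a lam v ≤ 1 → Jd S a lam R p u v = 0 := by
      intro v hv hv1
      have t1 : Tendsto (fun n => Jd S a lam R p (V n) v) atTop (nhds 0) :=
        squeeze_zero_norm (fun n => le_dual H ha hl (hV n) hv hv1) hd
      have t2 : Tendsto (fun n => Jd S a lam R p (w n) v) atTop (nhds 0) := by
        have := (weak_inner ha hl hw0 hwE hwM hv).sub
          (KK_fixed_right H hM2 (hvL v hv hv1) hwL hw0)
        simp only [Jd_eq H ha hl (hwE _) hv]
        simpa using this
      have t3 := (t1.sub t2).add (hsv (fun _ => v) fun _ => hvL v hv hv1)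
      have t4 : (fun n => Jd S a lam R p (V n) v - Jd S a lam R p (w n) v +
          (KK (Qf R) p (V n) v - KK (Qf R) p u v - KK (Qf R) p (w n) v)) =
          fun _ => Jd S a lam R p u v := by
        funext n; rw [hJd n v hv]; ring
      rw [t4] at t3
      simpa using tendsto_nhds_unique tendsto_const_nhds t3
    rw [Metric.tendsto_nhds]
    intro ε hε
    filter_upwards [hsplit (ε / 4) (by positivity),
      hd.eventually (gt_mem_nhds (by positivity : 0 < ε / 4))] with n h1 h2
    rw [dist_zero_right, Real.norm_eq_abs, abs_of_nonneg (dual_nonneg _)]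
    have : dualNorm S a lam R p (w n) ≤ ε / 2 := by
      refine dual_le (by positivity) fun v hv hv1 => ?_
      rw [hJd n v hv, hcrit v hv hv1, sub_zero]
      have e1 := le_dual H ha hl (hV n) hv hv1
      have e2 := h1 v (hvL v hv hv1)
      have e3 := abs_add_le (Jd S a lam R p (V n) v)
        (KK (Qf R) p (V n) v - KK (Qf R) p u v - KK (Qf R) p (w n) v)
      linarith
    linarith

end F

theorem PS_splitting
    {G : Type*} [Group G] [Countable G] [DecidableEq G]
    (S : Finset G) (hSsymm : ∀ s ∈ S, s⁻¹ ∈ S)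
    (hSgen : Subgroup.closure (S : Set G) = ⊤)
    (N : ℕ) (hN : 2 ≤ N) (hgrowth : PolyGrowth S N)
    (α : ℝ) (hα0 : 0 < α) (hαN : α < (N : ℝ))
    (R : G → G → ℝ) (hR : RieszKernel S N α R)
    (p : ℝ) (hp : ((N : ℝ) + α) / (N : ℝ) < p)
    (a : G → ℝ) (ha : ∀ x, 0 ≤ a x)
    (lam : ℝ) (hlam : 0 < lam)
    (c : ℝ) (U : ℕ → G → ℝ) (hU : PSseq S a lam R p c U) :
    ∃ φ : ℕ → ℕ, StrictMono φ ∧ ∃ u : G → ℝ, MemE S a lam u ∧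
      (∀ x, Tendsto (fun n => U (φ n) x) atTop (nhds (u x))) ∧
      Tendsto (fun n => Jfun S a lam R p (U (φ n) - u)) atTop
        (nhds (c - Jfun S a lam R p u)) ∧
      Tendsto (fun n => dualNorm S a lam R p (U (φ n) - u)) atTop (nhds 0) := by
  obtain ⟨θ, h1, h2, h3, k, hk, hks, hkR⟩ := exists_kernel hN hgrowth hα0 hαN hR hp
  have H : KD θ p (Qf R) k := ⟨h1, h2, h3, hk, hks, fun x y => by
    by_cases hyx : y = x
    · simp [Qf, hyx]
    · simpa [Qf, hyx] using (hR.1 x y).le, hkR⟩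
  obtain ⟨M, hM, hUM⟩ := PS_bdd H ha hlam hU
  obtain ⟨hm, hJ, hd⟩ := hU
  obtain ⟨φ, hφ, u, hu⟩ := exists_subseq (U := U) (M := M) fun n x =>
    (memE_L2 ha hlam (hm n) (hUM n)).abs_le (by linarith) x
  obtain ⟨huE, huM⟩ := fatou ha hlam hu (fun n => hm (φ n)) (fun n => hUM (φ n))
  refine ⟨φ, hφ, u, huE, hu, ?_⟩
  exact splitting_core H ha hlam hM (V := fun n => U (φ n)) (w := fun n => U (φ n) - u)
    (fun n => hm (φ n)) huE (fun n => hUM (φ n)) huM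
    (hJ.comp hφ.tendsto_atTop) (hd.comp hφ.tendsto_atTop)
    (fun n => by funext x; simp only [Pi.sub_apply]; ring)
    (fun x => by simpa using (hu x).sub_const (u x))

end Choquard
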